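/- No Uniformization Theorem: there is an infinite time decidable set A ⊆ 2^ℕ × 2^ℕ such that every slice A_y = {z ∈ 2^ℕ : (y,z) ∈ A} is nonempty, yet there is no program p such that φ_p is total on 2^ℕ and (y, φ_p(y)) ∈ A for every y ∈ 2^ℕ. -/

import Mathlib

open scoped Classical

namespace ITTM

/-- A real is an element of Cantor space. -/
abbrev R := ℕ → Bool

/-- The constant-zero real. -/
def zeroR : R := fun _ => false

/-- The real ⟨1,0,0,...⟩ coding the answer "Yes". -/
def oneR : R := fun n => decide (n = 0)

/-- The real coding a natural number `p`: `p` ones followed by zeros. -/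
def natR (p : ℕ) : R := fun n => decide (n < p)

/-- The real coding the pair of reals `(y, z)`. -/
def pairR (y z : R) : R := fun n => if n % 2 = 0 then y (n / 2) else z (n / 2)

/-- A snapshot of an infinite time Turing machine computation with state set
`Fin (Q+1)`: the current state, the head position, and the contents of the
three tapes (tape 0 is the input tape, tape 1 the scratch tape, tape 2 the
output tape); cells hold values in `Bool` (`true` = 1, `false` = 0). -/
structure Snapshot (Q : ℕ) where
  state : Fin (Q + 1)
  head : ℕ
  tape : Fin 3 → ℕ → Bool

/-- An infinite time Turing machine program: a finite set of states
`Fin (Q+1)` with distinguished start, limit and halt states, and a finite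
transition table which, given the current state and the three cell values
read by the head, specifies the next state, the three values to write, and
the direction to move (`true` = right, `false` = left). -/
structure Machine where
  Q : ℕ
  start : Fin (Q + 1)
  limit : Fin (Q + 1)
  halt : Fin (Q + 1)
  trans : Fin (Q + 1) × (Fin 3 → Bool) → Fin (Q + 1) × (Fin 3 → Bool) × Bool

instance : Inhabited Machine := ⟨⟨0, 0, 0, 0, fun _ => (0, fun _ => false, true)⟩⟩

namespace Machine

/-- The initial snapshot on input `x`: head on cell 0 in the start state, `x`
on the input tape, the other tapes filled with zeros. -/
def init (M : Machine) (x : R) : Snapshot M.Q where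
  state := M.start
  head := 0
  tape := fun i n => if i = 0 then x n else false

/-- One step of computation applied to a snapshot. -/
def stepSnap (M : Machine) (s : Snapshot M.Q) : Snapshot M.Q :=
  let t := M.trans (s.state, fun i => s.tape i s.head)
  { state := t.1
    head := if t.2.2 then s.head + 1 else s.head - 1
    tape := fun i n => if n = s.head then t.2.1 i else s.tape i n }

/-- The snapshot of the computation of machine `M` on input `x` at ordinal
stage `α`, defined by transfinite recursion: at stage 0 the initial snapshot,
at successor stages the transition table is applied, and at limit stages the
head is on cell 0 in the limit state and each cell holds the `limsup` of its
earlier values (1 iff its value was 1 cofinally often below the limit). -/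
noncomputable def snap (M : Machine) (x : R) : Ordinal.{0} → Snapshot M.Q :=
  WellFounded.fix Ordinal.lt_wf fun α ih =>
    if _h0 : α = 0 then M.init x
    else if hs : ∃ β, β < α ∧ α = β + 1 then
      M.stepSnap (ih hs.choose hs.choose_spec.1)
    else
      { state := M.limit
        head := 0
        tape := fun i n =>
          decide (∀ β < α, ∃ γ, β ≤ γ ∧ ∃ hγ : γ < α, (ih γ hγ).tape i n = true) }

/-- The machine is in the halt state at stage `α`. -/
def haltedAt (M : Machine) (x : R) (α : Ordinal) : Prop :=
  (M.snap x α).state = M.halt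

/-- The computation of `M` on input `x` halts exactly at stage `α`: stage `α`
is the first stage at which the machine is in the halt state. -/
def haltsAt (M : Machine) (x : R) (α : Ordinal) : Prop :=
  M.haltedAt x α ∧ ∀ β < α, ¬ M.haltedAt x β

/-- The computation of `M` on input `x` halts. -/
def halts (M : Machine) (x : R) : Prop := ∃ α, M.haltedAt x α

/-- The computation of `M` on input `x` halts with output `y`: at the first
stage at which the machine is in the halt state, the output tape reads `y`. -/
def outputs (M : Machine) (x y : R) : Prop :=
  ∃ α, M.haltsAt x α ∧ (M.snap x α).tape 2 = y

end Machine

/-- Machines are coded by natural numbers. -/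
noncomputable instance : Encodable Machine :=
  Encodable.ofEquiv
    (Σ Q : ℕ, (Fin (Q + 1) × Fin (Q + 1) × Fin (Q + 1)) ×
      ((Fin (Q + 1) × (Fin 3 → Bool)) → Fin (Q + 1) × (Fin 3 → Bool) × Bool))
    { toFun := fun M => ⟨M.Q, (M.start, M.limit, M.halt), M.trans⟩
      invFun := fun s => ⟨s.1, s.2.1.1, s.2.1.2.1, s.2.1.2.2, s.2.2⟩
      left_inv := fun _ => rfl
      right_inv := fun _ => rfl }

/-- The machine coded by the natural number `p`; every natural number codes a
machine, and every machine is coded by some natural number. -/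
noncomputable def prog (p : ℕ) : Machine :=
  ((Encodable.decode p : Option Machine)).getD default

/-- `φ_p(x)` halts with output `y`. -/
noncomputable def phiOutputs (p : ℕ) (x y : R) : Prop := (prog p).outputs x y

/-- A set of reals is infinite time decidable when some machine, on any input
`x`, halts with output ⟨1,0,0,...⟩ if `x ∈ A` and output ⟨0,0,0,...⟩ if
`x ∉ A`. -/
def ITTMDecidable (A : Set R) : Prop :=
  ∃ M : Machine, ∀ x : R, (x ∈ A → M.outputs x oneR) ∧ (x ∉ A → M.outputs x zeroR)

/-- A set of reals is infinite time semi-decidable when it is the halting set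
of some machine. -/
def ITTMSemiDecidable (A : Set R) : Prop :=
  ∃ M : Machine, A = {x : R | M.halts x}

/-- The binary relation on ℕ coded by the real `x`:
`n ◁ k ⟺ x(⟨n,k⟩) = 1` where `⟨·,·⟩` is the pairing function. -/
def rel (x : R) (n k : ℕ) : Prop := x (Nat.pair n k) = true

/-- The field of the relation coded by `x`. -/
def field (x : R) : Set ℕ := {n | ∃ k, rel x n k ∨ rel x k n}

/-- The relation coded by `x`, restricted to its field. -/
def relOn (x : R) : field x → field x → Prop := fun a b => rel x a.1 b.1

/-- The real `x` codes a well-order of (a subset of) ℕ, namely its field. -/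
def codesWellOrder (x : R) : Prop := IsWellOrder (field x) (relOn x)

/-- The set of reals coding well-orders. -/
def WO : Set R := {x | codesWellOrder x}

/-- The real `x` codes a well-order of order type `α`. -/
def codesOrdinal (x : R) (α : Ordinal) : Prop :=
  ∃ h : codesWellOrder x, @Ordinal.type _ (relOn x) h = α

/-- An ordinal is clockable when some machine on input 0 halts exactly at
stage `α`. -/
def Clockable (α : Ordinal) : Prop := ∃ M : Machine, M.haltsAt zeroR α

/-- A real is writable when it is the output of some machine on input 0. -/
def WritableReal (x : R) : Prop := ∃ M : Machine, M.outputs zeroR x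

/-- An ordinal is writable when some writable real codes a well-order of that
order type. -/
def WritableOrdinal (α : Ordinal) : Prop :=
  ∃ x : R, WritableReal x ∧ codesOrdinal x α

/-- A real is eventually writable when some machine on input 0 never halts,
but from some stage onward the content of its output tape is exactly `x`. -/
def EventuallyWritableReal (x : R) : Prop :=
  ∃ M : Machine, ¬ M.halts zeroR ∧ ∃ α : Ordinal, ∀ β ≥ α, (M.snap zeroR β).tape 2 = x

/-- An ordinal is eventually writable when some eventually writable real codes
a well-order of that order type. -/
def EventuallyWritableOrdinal (α : Ordinal) : Prop :=
  ∃ x : R, EventuallyWritableReal x ∧ codesOrdinal x α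

end ITTM

/-- The first component of the pair coded by the real `w`. -/
def leftR (w : ITTM.R) : ITTM.R := fun n => w (2 * n)

/-- The second component of the pair coded by the real `w`. -/
def rightR (w : ITTM.R) : ITTM.R := fun n => w (2 * n + 1)

/-- The set of reals coding (via the pair coding `w(2n) = y(n)`,
`w(2n+1) = z(n)`) the pairs in a set `A ⊆ 2^ℕ × 2^ℕ`; a set of pairs of reals
is called decidable (or semi-decidable) when this set of codes is. -/
def pairCodes (A : Set (ITTM.R × ITTM.R)) : Set ITTM.R :=
  {w : ITTM.R | (leftR w, rightR w) ∈ A}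

open Ordinal Order

namespace ITTM

/-- The `limsup` of a transfinite sequence of bits below `a`. -/
noncomputable def lsup (f : Ordinal.{0} → Bool) (a : Ordinal.{0}) : Bool :=
  decide (∀ b < a, ∃ c, b ≤ c ∧ c < a ∧ f c = true)

theorem lsup_eq_true {f : Ordinal.{0} → Bool} {a : Ordinal.{0}} :
    lsup f a = true ↔ ∀ b < a, ∃ c, b ≤ c ∧ c < a ∧ f c = true := by
  simp [lsup]

theorem lsup_eq_false {f : Ordinal.{0} → Bool} {a : Ordinal.{0}} :
    lsup f a = false ↔ ∃ b < a, ∀ c, b ≤ c → c < a → f c = false := by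
  simp [lsup]

theorem lsup_congr {f g : Ordinal.{0} → Bool} {a : Ordinal.{0}} (h : ∀ b < a, f b = g b) :
    lsup f a = lsup g a := by
  rw [Bool.eq_iff_iff, lsup_eq_true, lsup_eq_true]
  refine forall₂_congr fun b _ => exists_congr fun c => ?_
  constructor <;> rintro ⟨h1, h2, h3⟩ <;> refine ⟨h1, h2, ?_⟩ <;> simpa [h c h2] using h3

theorem lsup_of_eventually {f : Ordinal.{0} → Bool} {a b : Ordinal.{0}} {v : Bool} (hb : b < a)
    (h : ∀ c, b ≤ c → c < a → f c = v) : lsup f a = v := by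
  cases v with
  | false => exact lsup_eq_false.2 ⟨b, hb, h⟩
  | true => exact lsup_eq_true.2 fun c hc =>
      ⟨max b c, le_max_right _ _, max_lt hb hc, h _ (le_max_left _ _) (max_lt hb hc)⟩

theorem lsup_add {f : Ordinal.{0} → Bool} {t a : Ordinal.{0}} (ha : 0 < a) :
    lsup f (t + a) = lsup (fun c => f (t + c)) a := by
  rw [Bool.eq_iff_iff, lsup_eq_true, lsup_eq_true]
  constructor
  · intro h b hb
    obtain ⟨c, h1, h2, h3⟩ := h (t + b) (by gcongr)
    have htc : t ≤ c := le_self_add.trans h1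
    rw [← Ordinal.add_sub_cancel_of_le htc] at h1 h2 h3
    exact ⟨c - t, (add_le_add_iff_left t).1 h1, (add_lt_add_iff_left t).1 h2, h3⟩
  · intro h b hb
    rcases le_total t b with htb | htb
    · rw [← Ordinal.add_sub_cancel_of_le htb] at hb
      obtain ⟨c, h1, h2, h3⟩ := h (b - t) ((add_lt_add_iff_left t).1 hb)
      refine ⟨t + c, ?_, by gcongr, h3⟩
      rw [← Ordinal.add_sub_cancel_of_le htb]
      gcongr
    · obtain ⟨c, h1, h2, h3⟩ := h 0 ha
      exact ⟨t + c, htb.trans le_self_add, by gcongr, h3⟩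

/-- The `limsup` at `k * a` may be computed along the multiples of `k`, provided a bit that is
on somewhere inside a block is on at one of the two ends of the block. -/
theorem lsup_mul {f : Ordinal.{0} → Bool} {k a : Ordinal.{0}} (hk : 0 < k) (ha : IsSuccLimit a)
    (h : ∀ b < a, ∀ c < k, f (k * b + c) = true →
      f (k * b) = true ∨ f (k * (b + 1)) = true) :
    lsup f (k * a) = lsup (fun b => f (k * b)) a := by
  rw [Bool.eq_iff_iff, lsup_eq_true, lsup_eq_true]
  constructor
  · intro H b hb
    obtain ⟨c, h1, h2, h3⟩ := H (k * b) ((mul_lt_mul_iff_right₀ hk).2 hb)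
    have hdiv : k * (c / k) + c % k = c := Ordinal.div_add_mod c k
    have hlt : c / k < a := (Ordinal.lt_mul_iff_div_lt hk.ne').1 h2
    have hle : b ≤ c / k := (Ordinal.mul_le_iff_le_div hk.ne').1 h1
    rcases h (c / k) hlt (c % k) (Ordinal.mod_lt c hk.ne') (by rw [hdiv]; exact h3) with h4 | h4
    · exact ⟨_, hle, hlt, h4⟩
    · exact ⟨_, hle.trans (le_self_add), by simpa using ha.succ_lt hlt, h4⟩
  · intro H b hb
    obtain ⟨c, h1, h2, h3⟩ := H (b / k + 1) (by
      simpa using ha.succ_lt ((Ordinal.lt_mul_iff_div_lt hk.ne').1 hb))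
    refine ⟨k * c, ?_, (mul_lt_mul_iff_right₀ hk).2 h2, h3⟩
    calc b ≤ k * (b / k + 1) := by
            have := (Ordinal.lt_mul_succ_div b hk.ne').le
            simpa using this
      _ ≤ k * c := by gcongr

/-- Transfinite iteration of `s` from `x₀`, with limit rule `L`. -/
noncomputable def titer {X : Type} (x₀ : X) (s : X → X)
    (L : (Ordinal.{0} → X) → Ordinal.{0} → X) (a : Ordinal.{0}) : X :=
  Ordinal.limitRecOn (motive := fun _ => X) a x₀ (fun _ x => s x)
    (fun a _ ih => L (fun b => if h : b < a then ih b h else x₀) a)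

section titer
variable {X : Type} {x₀ : X} {s : X → X} {L : (Ordinal.{0} → X) → Ordinal.{0} → X}

theorem titer_zero : titer x₀ s L 0 = x₀ := by simp [titer]

theorem titer_add_one (a : Ordinal.{0}) : titer x₀ s L (a + 1) = s (titer x₀ s L a) := by
  simp [titer]

theorem titer_limit (hL : ∀ f g a, (∀ b < a, f b = g b) → L f a = L g a) {a : Ordinal.{0}}
    (ha : IsSuccLimit a) : titer x₀ s L a = L (titer x₀ s L) a := by
  rw [titer, Ordinal.limitRecOn_limit _ _ _ _ ha]
  exact hL _ _ _ fun b hb => by simp [hb, titer]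

theorem titer_add_nat (a : Ordinal.{0}) (n : ℕ) :
    titer x₀ s L (a + n) = s^[n] (titer x₀ s L a) := by
  induction n with
  | zero => simp
  | succ n ih => rw [Nat.cast_succ, ← add_assoc, titer_add_one, ih, Function.iterate_succ_apply']

end titer

/-- Induction on ordinals with the successor written as `a + 1`. -/
theorem ord_induction {p : Ordinal.{0} → Prop} (h0 : p 0) (h1 : ∀ a, p a → p (a + 1))
    (h2 : ∀ a, IsSuccLimit a → (∀ b < a, p b) → p a) (a : Ordinal.{0}) : p a :=
  Ordinal.limitRecOn (motive := p) a h0 h1 h2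

theorem zero_or_add_one_or_limit (a : Ordinal.{0}) :
    a = 0 ∨ (∃ b, a = b + 1) ∨ IsSuccLimit a := by
  rcases Ordinal.zero_or_succ_or_isSuccLimit a with h | ⟨b, h⟩ | h
  · exact Or.inl h
  · exact Or.inr (Or.inl ⟨b, by simpa using h.symm⟩)
  · exact Or.inr (Or.inr h)

namespace Machine
variable (M : Machine) (x : R)

theorem snap_eq (a : Ordinal.{0}) : M.snap x a =
    if _h0 : a = 0 then M.init x
    else if hs : ∃ β, β < a ∧ a = β + 1 then M.stepSnap (M.snap x hs.choose)
    else ⟨M.limit, 0, fun i n => lsup (fun c => (M.snap x c).tape i n) a⟩ := by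
  rw [snap, WellFounded.fix_eq]
  simp only [lsup, exists_prop]

theorem snap_zero : M.snap x 0 = M.init x := by rw [snap_eq]; simp

theorem snap_add_one (a : Ordinal.{0}) : M.snap x (a + 1) = M.stepSnap (M.snap x a) := by
  have hs : ∃ β, β < a + 1 ∧ a + 1 = β + 1 := ⟨a, by simp, rfl⟩
  rw [snap_eq, dif_neg (by simp), dif_pos hs]
  have := hs.choose_spec.2
  rw [← succ_injective (by simpa using this : succ a = succ hs.choose)]

theorem snap_limit {a : Ordinal.{0}} (ha : IsSuccLimit a) :
    M.snap x a = ⟨M.limit, 0, fun i n => lsup (fun c => (M.snap x c).tape i n) a⟩ := by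
  rw [snap_eq, dif_neg (by rintro rfl; simp at ha), dif_neg]
  rintro ⟨b, -, rfl⟩
  simp at ha

end Machine

end ITTM

namespace ITTM

/-- A configuration: state, head position and tape contents, where a cell of the tape holds a
valuation of the index type `τ`. -/
@[ext] structure Conf (σ τ : Type) where
  state : σ
  head : ℕ
  cell : ℕ → τ → Bool

/-- A program with states in `σ` acting on a tape whose cells carry a bit for each `t : τ`. -/
structure Prog (σ τ : Type) where
  start : σ
  lim : σ
  halt : σ
  tr : σ → (τ → Bool) → σ × (τ → Bool) × Bool

namespace Prog
variable {σ τ : Type}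

/-- One computation step. -/
def step (p : Prog σ τ) (c : Conf σ τ) : Conf σ τ where
  state := (p.tr c.state (c.cell c.head)).1
  head := if (p.tr c.state (c.cell c.head)).2.2 then c.head + 1 else c.head - 1
  cell := Function.update c.cell c.head (p.tr c.state (c.cell c.head)).2.1

/-- The configuration at a limit stage. -/
noncomputable def limConf (p : Prog σ τ) (f : Ordinal.{0} → Conf σ τ) (a : Ordinal.{0}) :
    Conf σ τ :=
  ⟨p.lim, 0, fun n t => lsup (fun b => (f b).cell n t) a⟩

/-- The transfinite computation started from the tape contents `c₀`. -/
noncomputable def run (p : Prog σ τ) (c₀ : ℕ → τ → Bool) : Ordinal.{0} → Conf σ τ :=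
  titer ⟨p.start, 0, c₀⟩ p.step p.limConf

variable (p : Prog σ τ) (c₀ : ℕ → τ → Bool)

theorem run_zero : p.run c₀ 0 = ⟨p.start, 0, c₀⟩ := titer_zero

theorem run_add_one (a : Ordinal.{0}) : p.run c₀ (a + 1) = p.step (p.run c₀ a) :=
  titer_add_one a

theorem run_add_nat (a : Ordinal.{0}) (n : ℕ) :
    p.run c₀ (a + n) = p.step^[n] (p.run c₀ a) := titer_add_nat a n

theorem run_limit {a : Ordinal.{0}} (ha : IsSuccLimit a) :
    p.run c₀ a = p.limConf (p.run c₀) a := by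
  refine titer_limit (fun f g a h => ?_) ha
  simp only [limConf, Conf.mk.injEq, true_and]
  funext n t
  exact lsup_congr fun b hb => by rw [h b hb]

/-- Every program over the three bit tape is simulated by a machine. -/
theorem exists_machine {S : Type} [Fintype S] (p : Prog S (Fin 3)) :
    ∃ M : Machine, ∀ w a,
      (∀ b < a, (p.run (fun n i => if i = 0 then w n else false) b).state ≠ p.halt) →
      (p.run (fun n i => if i = 0 then w n else false) a).state = p.halt →
      M.outputs w (fun n => (p.run (fun n i => if i = 0 then w n else false) a).cell n 2) := by
  have : Nonempty S := ⟨p.start⟩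
  have hc : Fintype.card S = Fintype.card S - 1 + 1 := (Nat.succ_pred Fintype.card_ne_zero).symm
  let e : S ≃ Fin (Fintype.card S - 1 + 1) := Fintype.equivFinOfCardEq hc
  let M : Machine := ⟨Fintype.card S - 1, e p.start, e p.lim, e p.halt, fun x =>
    (e (p.tr (e.symm x.1) x.2).1, (p.tr (e.symm x.1) x.2).2.1, (p.tr (e.symm x.1) x.2).2.2)⟩
  refine ⟨M, fun w a h1 h2 => ?_⟩
  set c₀ : ℕ → Fin 3 → Bool := fun n i => if i = 0 then w n else false with hc₀
  have key : ∀ a, M.snap w a =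
      ⟨e (p.run c₀ a).state, (p.run c₀ a).head, fun i n => (p.run c₀ a).cell n i⟩ := by
    intro a
    induction a using ord_induction with
    | h0 => rw [M.snap_zero, run_zero]; rfl
    | h1 a ih =>
      rw [M.snap_add_one, run_add_one, ih]
      simp only [Machine.stepSnap, step, M, Equiv.symm_apply_apply, Snapshot.mk.injEq, true_and]
      funext i n
      by_cases h : n = (p.run c₀ a).head <;> simp [Function.update, h]
    | h2 a ha ih =>
      rw [M.snap_limit w ha, run_limit p c₀ ha]
      simp only [limConf, M, Snapshot.mk.injEq, true_and]
      funext i n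
      exact lsup_congr fun b hb => by rw [ih b hb]
  refine ⟨a, ⟨?_, fun b hb => ?_⟩, ?_⟩
  · simp [Machine.haltedAt, key, h2, M]
  · simpa [Machine.haltedAt, key, M] using h1 b hb
  · rw [key]

end Prog

/-- The number of steps in which one step of a multitrack program is simulated. -/
@[irreducible] def blockLen : ℕ := 80

theorem blockLen_eq : blockLen = 80 := by rw [blockLen]

theorem blockLen_pos : (0 : Ordinal.{0}) < blockLen := by
  rw [← Nat.cast_zero, Nat.cast_lt, blockLen]; norm_num

section Blocks
variable {σ τ : Type} (pos : τ → Fin 3 × Fin 16)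

/-- The contents of a block of sixteen cells representing one cell of a multitrack tape. -/
noncomputable def encCell (c : τ → Bool) (j : Fin 16) (i : Fin 3) : Bool :=
  decide (∃ t, pos t = (i, j) ∧ c t = true)

theorem encCell_pos (hpos : Function.Injective pos) (c : τ → Bool) (t : τ) :
    encCell pos c (pos t).2 (pos t).1 = c t := by
  rw [Bool.eq_iff_iff]
  simp only [encCell, decide_eq_true_eq]
  exact ⟨fun ⟨s, h, hs⟩ => hpos h ▸ hs, fun h => ⟨t, rfl, h⟩⟩

/-- The multitrack cell represented by a block. -/
def decCell (b : Fin 16 → Fin 3 → Bool) (t : τ) : Bool := b (pos t).2 (pos t).1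

theorem decCell_encCell (hpos : Function.Injective pos) (c : τ → Bool) :
    decCell pos (encCell pos c) = c := funext fun t => encCell_pos pos hpos c t

/-- The bit tape representing a multitrack tape. -/
noncomputable def encTape (c : ℕ → τ → Bool) (n : ℕ) (i : Fin 3) : Bool :=
  encCell pos (c (n / 16)) (Fin.ofNat 16 n) i

/-- The states of the bit tape simulation: the simulated state, a phase, and a buffer. -/
abbrev BlockState (σ : Type) := σ × Fin 80 × (Fin 16 → Fin 3 → Bool)

/-- The simulation of a multitrack program, one step at a time by eighty steps: read the block,
go back, write the new block, and move to the next block. -/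
noncomputable def blockProg (p : Prog σ τ) : Prog (BlockState σ) (Fin 3) where
  start := (p.start, 0, fun _ _ => false)
  lim := (p.lim, 0, fun _ _ => false)
  halt := (p.halt, 0, fun _ _ => false)
  tr s r :=
    let q := s.1
    let i := s.2.1.val
    let b := s.2.2
    let o := p.tr q (decCell pos b)
    if i < 16 then ((q, Fin.ofNat 80 (i + 1), Function.update b (Fin.ofNat 16 i) r), r, true)
    else if i < 32 then ((q, Fin.ofNat 80 (i + 1), b), r, false)
    else if i < 48 then
      ((q, Fin.ofNat 80 (i + 1), b), encCell pos o.2.1 (Fin.ofNat 16 (i - 32)), true)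
    else if i < 64 then ((q, Fin.ofNat 80 (i + 1), b), r, false)
    else if i < 79 then ((q, Fin.ofNat 80 (i + 1), b), r, o.2.2)
    else ((o.1, 0, fun _ _ => false), r, o.2.2)

/-- The head position after `i` of the eighty steps simulating a step at `h` moving by `d`. -/
def microHead (d : Bool) (h i : ℕ) : ℕ :=
  if i ≤ 16 then 16 * h + i else if i ≤ 32 then 16 * h + 32 - i
  else if i ≤ 48 then 16 * h + i - 32
  else if d = true ∧ 64 ≤ i then 16 * h + i - 64
  else 16 * h + 64 - i

/-- The bit tape configuration after `i` of the eighty steps simulating a step from `c`. -/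
noncomputable def microConf (p : Prog σ τ) (c : Conf σ τ) (i : ℕ) : Conf (BlockState σ) (Fin 3) where
  state := (c.state, Fin.ofNat 80 i,
    fun j k => if j.val < i then encCell pos (c.cell c.head) j k else false)
  head := microHead (p.tr c.state (c.cell c.head)).2.2 c.head i
  cell n k := if n / 16 = c.head ∧ n % 16 + 32 < i then encTape pos (p.step c).cell n k
    else encTape pos c.cell n k

/-- The bit tape configuration representing a multitrack configuration. -/
noncomputable def encConf (c : Conf σ τ) : Conf (BlockState σ) (Fin 3) :=
  ⟨(c.state, 0, fun _ _ => false), 16 * c.head, encTape pos c.cell⟩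

theorem microConf_zero (p : Prog σ τ) (c : Conf σ τ) : microConf pos p c 0 = encConf pos c := by
  simp [microConf, encConf, microHead]

theorem ofNat_val {i : ℕ} (h : i < 80) : (Fin.ofNat 80 i).val = i := by
  simp [Fin.ofNat, Nat.mod_eq_of_lt h]

theorem microHead_succ {d e : Bool} {h i : ℕ} (hi : i < 80)
    (he : e = true ↔ i < 16 ∨ 32 ≤ i ∧ i < 48 ∨ 64 ≤ i ∧ d = true) :
    (if e then microHead d h i + 1 else microHead d h i - 1) = microHead d h (i + 1) := by
  unfold microHead
  cases d <;> cases e <;> simp at he ⊢ <;> split_ifs <;> omega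

theorem decCell_micro (hpos : Function.Injective pos) (p : Prog σ τ) (c : Conf σ τ) {i : ℕ}
    (h : 16 ≤ i) : decCell pos (microConf pos p c i).state.2.2 = c.cell c.head := by
  have : (microConf pos p c i).state.2.2 = encCell pos (c.cell c.head) := by
    funext j k
    have : j.val < i := by omega
    simp [microConf, this]
  rw [this, decCell_encCell pos hpos]

theorem microConf_cell_succ (p : Prog σ τ) (c : Conf σ τ) {i : ℕ}
    (hi : i < 32 ∨ 48 ≤ i) : (microConf pos p c (i + 1)).cell = (microConf pos p c i).cell := by
  funext n k
  have : n % 16 + 32 < i + 1 ↔ n % 16 + 32 < i := by omega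
  simp only [microConf, this]

theorem microConf_state_succ (p : Prog σ τ) (c : Conf σ τ) {i : ℕ} (hi : 16 ≤ i) :
    (microConf pos p c (i + 1)).state =
      ((microConf pos p c i).state.1, Fin.ofNat 80 (i + 1), (microConf pos p c i).state.2.2) := by
  simp only [microConf, Prod.mk.injEq, true_and]
  funext j k
  have : j.val < i + 1 ↔ j.val < i := by omega
  simp only [this]

theorem blockProg_step_micro (hpos : Function.Injective pos) (p : Prog σ τ) (c : Conf σ τ) {i : ℕ}
    (hi : i < 79) :
    (blockProg pos p).step (microConf pos p c i) = microConf pos p c (i + 1) := by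
  have hph : (microConf pos p c i).state.2.1.val = i := ofNat_val (by omega)
  have hdec := decCell_micro pos hpos p c (i := i)
  have hst := microConf_state_succ pos p c (i := i)
  have hcell := microConf_cell_succ pos p c (i := i)
  have hs : (microConf pos p c i).state.1 = c.state := rfl
  rcases lt_or_ge i 16 with h16 | h16
  · have htr : (blockProg pos p).tr (microConf pos p c i).state
        ((microConf pos p c i).cell (microConf pos p c i).head) = _ := if_pos (by rwa [hph])
    rw [Prog.step, htr, hph]
    ext1
    · simp only [microConf, Prod.mk.injEq, true_and]
      funext j k
      by_cases hj : j = Fin.ofNat 16 i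
      · subst hj
        simp [h16.le, encTape, Nat.mod_eq_of_lt h16, Nat.mul_add_div, Nat.div_eq_of_lt h16,
          Fin.ofNat, Nat.add_mod, microHead]
      · have hj' : j.val ≠ i := fun h => hj (Fin.ext (by simp [Fin.ofNat, ← h, Nat.mod_eq_of_lt j.isLt]))
        rw [Function.update_of_ne hj]
        have : j.val < i + 1 ↔ j.val < i := by omega
        simp only [this]
    · exact microHead_succ (e := true) (h := c.head) (i := i) (by omega) (by simp; omega)
    · rw [Function.update_eq_self, hcell (Or.inl (by omega))]
  rcases lt_or_ge i 32 with h32 | h32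
  · have htr : (blockProg pos p).tr (microConf pos p c i).state
        ((microConf pos p c i).cell (microConf pos p c i).head) = _ :=
      (if_neg (by omega)).trans (if_pos (by omega))
    rw [Prog.step, htr, hph]
    ext1
    · exact (hst h16).symm
    · exact microHead_succ (e := false) (h := c.head) (i := i) (by omega) (by simp; omega)
    · rw [Function.update_eq_self, hcell (Or.inl (by omega))]
  rcases lt_or_ge i 48 with h48 | h48
  · have htr : (blockProg pos p).tr (microConf pos p c i).state
        ((microConf pos p c i).cell (microConf pos p c i).head) = _ :=
      (if_neg (by omega)).trans ((if_neg (by omega)).trans (if_pos (by omega)))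
    have hhd : (microConf pos p c i).head = 16 * c.head + (i - 32) := by
      simp only [microConf, microHead]; split_ifs <;> omega
    rw [Prog.step, htr, hph]
    ext1
    · exact (hst h16).symm
    · exact microHead_succ (e := true) (h := c.head) (i := i) (by omega) (by simp; omega)
    · funext n k
      simp only [hhd, hdec h16, hs]
      by_cases hn : n = 16 * c.head + (i - 32)
      · subst hn
        have h1 : (16 * c.head + (i - 32)) / 16 = c.head := by omega
        have h2 : (16 * c.head + (i - 32)) % 16 + 32 < i + 1 := by omega
        have h3 : Fin.ofNat 16 (16 * c.head + (i - 32)) = Fin.ofNat 16 (i - 32) :=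
          Fin.ext (by simp [Fin.ofNat])
        rw [Function.update_self]
        simp only [microConf, encTape, h1, h2, h3, Prog.step, Function.update_self, true_and, if_true]
      · rw [Function.update_of_ne hn]
        have : (n / 16 = c.head ∧ n % 16 + 32 < i + 1) ↔ (n / 16 = c.head ∧ n % 16 + 32 < i) := by
          omega
        simp only [microConf, this]
  rcases lt_or_ge i 64 with h64 | h64
  · have htr : (blockProg pos p).tr (microConf pos p c i).state
        ((microConf pos p c i).cell (microConf pos p c i).head) = _ :=
      (if_neg (by omega)).trans ((if_neg (by omega)).trans
        ((if_neg (by omega)).trans (if_pos (by omega))))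
    rw [Prog.step, htr, hph]
    ext1
    · exact (hst h16).symm
    · exact microHead_succ (e := false) (h := c.head) (i := i) (by omega) (by simp; omega)
    · rw [Function.update_eq_self, hcell (Or.inr (by omega))]
  · have htr : (blockProg pos p).tr (microConf pos p c i).state
        ((microConf pos p c i).cell (microConf pos p c i).head) = _ :=
      (if_neg (by omega)).trans ((if_neg (by omega)).trans
        ((if_neg (by omega)).trans ((if_neg (by omega)).trans (if_pos (by omega)))))
    rw [Prog.step, htr, hph]
    ext1
    · exact (hst h16).symm
    · simp only [hdec h16, hs]
      exact microHead_succ (h := c.head) (i := i) (by omega) ⟨fun h => Or.inr (Or.inr ⟨by omega, h⟩), fun h => by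
        rcases h with h | h | h
        · omega
        · omega
        · exact h.2⟩
    · rw [Function.update_eq_self, hcell (Or.inr (by omega))]

theorem blockProg_step_last (hpos : Function.Injective pos) (p : Prog σ τ) (c : Conf σ τ) {i : ℕ}
    (hi : i = 79) : (blockProg pos p).step (microConf pos p c i) = encConf pos (p.step c) := by
  have hph : (microConf pos p c i).state.2.1.val = i := ofNat_val (by omega)
  have hs : (microConf pos p c i).state.1 = c.state := rfl
  have htr : (blockProg pos p).tr (microConf pos p c i).state
      ((microConf pos p c i).cell (microConf pos p c i).head) = _ :=
    (if_neg (by omega)).trans ((if_neg (by omega)).trans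
      ((if_neg (by omega)).trans ((if_neg (by omega)).trans (if_neg (by omega)))))
  rw [Prog.step, htr, decCell_micro pos hpos p c (by omega), hs]
  ext1
  · rfl
  · refine (microHead_succ (d := (p.tr c.state (c.cell c.head)).2.2) (h := c.head) (i := i)
      (by omega) ⟨fun h => Or.inr (Or.inr ⟨by omega, h⟩), fun h => by
        rcases h with h | h | h
        · omega
        · omega
        · exact h.2⟩).trans ?_
    simp only [encConf, Prog.step, microHead]
    cases (p.tr c.state (c.cell c.head)).2.2 <;> simp <;> split_ifs <;> omega
  · rw [Function.update_eq_self]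
    funext n k
    by_cases hn : n / 16 = c.head
    · have : n % 16 + 32 < i := by omega
      simp [microConf, encConf, hn, this]
    · simp [microConf, encConf, hn, encTape, Prog.step]

theorem blockProg_iterate (hpos : Function.Injective pos) (p : Prog σ τ) (c : Conf σ τ) {i : ℕ}
    (hi : i < 80) : (blockProg pos p).step^[i] (encConf pos c) = microConf pos p c i := by
  induction i with
  | zero => exact (microConf_zero pos p c).symm
  | succ i ih =>
    rw [Function.iterate_succ_apply', ih (by omega), blockProg_step_micro pos hpos p c (by omega)]

theorem blockProg_iterate_last (hpos : Function.Injective pos) (p : Prog σ τ) (c : Conf σ τ) :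
    (blockProg pos p).step^[blockLen] (encConf pos c) = encConf pos (p.step c) := by
  rw [blockLen, Function.iterate_succ_apply', blockProg_iterate pos hpos p c (by norm_num),
    blockProg_step_last pos hpos p c rfl]

theorem blockProg_run (hpos : Function.Injective pos) (p : Prog σ τ) (c₀ : ℕ → τ → Bool)
    (a : Ordinal.{0}) :
    (blockProg pos p).run (encTape pos c₀) (blockLen * a) = encConf pos (p.run c₀ a) := by
  induction a using ord_induction with
  | h0 => simp [Prog.run_zero, encConf, blockProg]
  | h1 a ih =>
    rw [mul_add_one, Prog.run_add_nat, ih, blockProg_iterate_last pos hpos, Prog.run_add_one]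
  | h2 a ha ih =>
    have hk := blockLen_pos
    rw [Prog.run_limit _ _ ha, Prog.run_limit _ _ (isSuccLimit_mul_right hk ha)]
    simp only [Prog.limConf, encConf, Conf.mk.injEq, mul_zero]
    refine ⟨rfl, trivial, ?_⟩
    funext n k
    rw [lsup_mul hk ha]
    · by_cases h : ∃ t, pos t = (k, Fin.ofNat 16 n)
      · obtain ⟨t, ht⟩ := h
        have : ∀ c : ℕ → τ → Bool, encTape pos c n k = c (n / 16) t := fun c => by
          rw [← encCell_pos pos hpos (c (n / 16)) t, ht]; rfl
        rw [this]
        exact lsup_congr fun b hb => by rw [ih b hb]; exact this _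
      · have : ∀ c : ℕ → τ → Bool, encTape pos c n k = false := fun c => by
          simp only [encTape, encCell, decide_eq_false_iff_not]
          exact fun ⟨t, ht, _⟩ => h ⟨t, ht⟩
        rw [this]
        refine lsup_of_eventually (b := 0) (by simpa using ha.bot_lt) fun c _ hc => ?_
        rw [ih c hc]
        exact this _
    · intro b hb c hc h
      obtain ⟨i, rfl⟩ := lt_omega0.1 (hc.trans (natCast_lt_omega0 blockLen))
      have hi : i < 80 := blockLen_eq ▸ Nat.cast_lt.1 hc
      rw [ih b hb]
      rw [mul_add_one, Prog.run_add_nat, ih b hb, blockProg_iterate_last pos hpos]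
      rw [Prog.run_add_nat, ih b hb, blockProg_iterate pos hpos _ _ hi] at h
      simp only [microConf] at h
      split_ifs at h
      · exact Or.inr h
      · exact Or.inl h

/-- Every multitrack program is simulated by a machine. -/
theorem exists_machine_of_prog [Fintype σ] (hpos : Function.Injective pos) (p : Prog σ τ)
    (c₀ : R → ℕ → τ → Bool)
    (hc₀ : ∀ w, encTape pos (c₀ w) = fun n i => if i = 0 then w n else false) :
    ∃ M : Machine, ∀ w a, (∀ b < a, (p.run (c₀ w) b).state ≠ p.halt) →
      (p.run (c₀ w) a).state = p.halt →
      M.outputs w (fun n => encTape pos (p.run (c₀ w) a).cell n 2) := by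
  obtain ⟨M, hM⟩ := (blockProg pos p).exists_machine
  refine ⟨M, fun w a h1 h2 => ?_⟩
  have hk := blockLen_pos.ne'
  have := hM w (blockLen * a)
  rw [← hc₀ w, blockProg_run pos hpos] at this
  refine this (fun t ht => ?_) (by simp [encConf, blockProg, h2])
  rw [← Ordinal.div_add_mod t blockLen]
  have hb := h1 _ ((Ordinal.lt_mul_iff_div_lt hk).1 ht)
  have hc := Ordinal.mod_lt t hk
  generalize t / blockLen = b at *
  generalize t % blockLen = c at *
  obtain ⟨i, rfl⟩ := lt_omega0.1 (hc.trans (natCast_lt_omega0 blockLen))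
  have hi : i < 80 := blockLen_eq ▸ Nat.cast_lt.1 hc
  rw [Prog.run_add_nat, blockProg_run pos hpos, blockProg_iterate pos hpos _ _ hi]
  rcases Nat.eq_zero_or_pos i with rfl | hi0
  · simp [microConf, blockProg, hb]
  · intro h
    have h0 : (Fin.ofNat 80 i).val = 0 := congrArg (fun s => s.2.1.val) h
    rw [ofNat_val hi] at h0
    omega

end Blocks

end ITTM

namespace ITTM

/-! ### Instruction streams -/

/-- Instructions of an engine that evaluates a list of conjunctive clauses. The engine has a
pointer, a flag, an operand, and a real under construction. -/
inductive Instr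
  | inc
  | reset
  | store
  | litD (b : Bool)
  | litI (r : Fin 8) (b : Bool)
deriving Fintype

/-- Three bits as an element of `Fin 8`. -/
def bits3 (x y z : Bool) : Fin 8 := Fin.ofNat 8 (4 * x.toNat + 2 * y.toNat + z.toNat)

/-- The instruction coded by eight bits. -/
def decI (b : Fin 8 → Bool) : Instr :=
  match b 0, b 1 with
  | false, false => if b 2 then .inc else .reset
  | false, true => .store
  | true, false => .litD (b 2)
  | true, true => .litI (bits3 (b 3) (b 4) (b 5)) (b 2)

theorem decI_surjective : Function.Surjective decI := by
  intro i
  cases i with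
  | inc => exact ⟨![false, false, true, false, false, false, false, false], rfl⟩
  | reset => exact ⟨![false, false, false, false, false, false, false, false], rfl⟩
  | store => exact ⟨![false, true, false, false, false, false, false, false], rfl⟩
  | litD b => exact ⟨![true, false, b, false, false, false, false, false], rfl⟩
  | litI r b =>
    have h : ∀ r, ∃ x y z, bits3 x y z = r := by decide
    obtain ⟨x, y, z, h⟩ := h r
    exact ⟨![true, true, b, x, y, z, false, false], by simp [decI, h]⟩

/-- The state of the engine: pointer, flag, and the real under construction. -/
structure Eng where
  p : ℕ
  f : Bool
  v : R

/-- The effect on the flag of an instruction executed with the pointer at a cell with operand bit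
`d` and input bits `ib`. -/
def Instr.flag (i : Instr) (d : Bool) (ib : Fin 8 → Bool) (f : Bool) : Bool :=
  match i with
  | .litD b => f && (d == b)
  | .litI r b => f && (ib r == b)
  | .store => true
  | _ => f

/-- One instruction of the engine, with operand `d` and input blocks `ib`. -/
def Instr.exec (i : Instr) (d : R) (ib : ℕ → Fin 8 → Bool) (s : Eng) : Eng where
  p := match i with
    | .inc => s.p + 1
    | .reset => 0
    | _ => s.p
  f := i.flag (d s.p) (ib s.p) s.f
  v := match i with
    | .store => Function.update s.v s.p (s.v s.p || s.f)
    | _ => s.v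

/-- The `n`-th block of eight bits of a real. -/
def block (u : R) (n : ℕ) (r : Fin 8) : Bool := u (8 * n + r.val)

/-- The state of the engine after executing the instructions coded in the blocks `1, …, k` of `u`
with operand `d`. -/
def eng (u d : R) : ℕ → Eng
  | 0 => ⟨0, true, fun _ => false⟩
  | k + 1 => (decI (block u (k + 1))).exec d (block u) (eng u d k)

/-- The operator on reals defined by the instruction stream `u`. -/
noncomputable def oper (u d : R) : R := fun n => decide (∃ k, (eng u d k).v n = true)

theorem eng_p_le (u d : R) (k : ℕ) : (eng u d k).p ≤ k := by
  induction k with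
  | zero => rfl
  | succ k ih =>
    simp only [eng, Instr.exec]
    cases decI (block u (k + 1)) <;> simp <;> omega

theorem eng_v_succ (u d : R) (k n : ℕ) (h : (eng u d k).v n = true) :
    (eng u d (k + 1)).v n = true := by
  simp only [eng, Instr.exec]
  cases decI (block u (k + 1)) <;> simp [h]
  by_cases hn : n = (eng u d k).p
  · subst hn; simp [h]
  · simp [hn, h]

theorem eng_v_mono (u d : R) {k l : ℕ} (hkl : k ≤ l) (n : ℕ) (h : (eng u d k).v n = true) :
    (eng u d l).v n = true := by
  induction hkl with
  | refl => exact h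
  | step _ ih => exact eng_v_succ u d _ n ih

theorem oper_eq_true {u d : R} {n : ℕ} : oper u d n = true ↔ ∃ k, (eng u d k).v n = true := by
  simp [oper]

/-! ### The tracks and the program -/

/-- The tracks of the tape of the deciding program. Modes: `true` for the first component of the
input, `false` for the second one. -/
inductive Trk
  | inp (i : Fin 16)
  | mark (m : Bool)
  | ptr (m : Bool)
  | val (m : Bool)
  | cur (m : Bool)
  | upd (m : Bool)
  | chg (m : Bool)
  | ref
  | fin
  | home

/-- The place of a track in a block of the three bit tapes. -/
def Trk.pos : Trk → Fin 3 × Fin 16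
  | .inp i => (0, i)
  | .mark m => (1, cond m 0 1)
  | .ptr m => (1, cond m 2 3)
  | .val m => (1, cond m 4 5)
  | .cur m => (1, cond m 6 7)
  | .upd m => (1, cond m 8 9)
  | .chg m => (1, cond m 10 11)
  | .ref => (1, 12)
  | .fin => (1, 13)
  | .home => (2, 0)

theorem Trk.pos_injective : Function.Injective Trk.pos := by
  intro s t h
  cases s <;> cases t <;> simp only [Trk.pos, Prod.mk.injEq] at h <;>
    first
    | rfl
    | (obtain ⟨-, rfl⟩ := h; rfl)
    | (rename_i m m'; revert h; cases m <;> cases m' <;> simp)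
    | (rename_i m; revert h; cases m <;> simp)
    | (revert h; simp)

/-- A cell of the tape of the deciding program. -/
abbrev Cell := Trk → Bool

/-- The input track holding bit `r` of the blocks of the component `m`. -/
def inpT (m : Bool) (r : Fin 8) : Trk :=
  if m then .inp (Fin.ofNat 16 (2 * r.val)) else .inp (Fin.ofNat 16 (2 * r.val + 1))

/-- Write the bit `b` on the track `t` of a cell. -/
noncomputable def Cell.set (c : Cell) (t : Trk) (b : Bool) : Cell := Function.update c t b

/-- The instruction of component `m` in a cell. -/
def Cell.instr (c : Cell) (m : Bool) : Instr := decI fun r => c (inpT m r)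

/-- The states of the deciding program. -/
inductive State
  | start
  | lim
  | halt
  | fetch (m f : Bool)
  | seek (m f : Bool) (i : Instr)
  | incw (m f : Bool)
  | rst (m f : Bool)
  | ret (m f : Bool)
  | look
  | judge (a b : Bool)
  | sweep (cap chk fin : Bool)
  | goHome (cap chk fin : Bool)
  | goMark (cap chk fin : Bool)
  | rej
deriving Fintype

/-- The element of the clock relation at this cell is enumerated at the present stage. -/
def Cell.flip (c : Cell) : Bool := !c (.cur false) && !c (.val false)

/-- The contents of a cell violates the requirements on the loop. -/
def Cell.viol (c : Cell) (chk fin : Bool) : Bool :=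
  chk && c (.cur true) && !c .ref || fin && (c (.cur true) != c .ref)

/-- The update of a cell in a sweep. -/
def Cell.next (c : Cell) (cap : Bool) : Cell
  | .mark _ => false
  | .ptr _ => false
  | .val _ => false
  | .cur true => c (.val true)
  | .cur false => c (.cur false) || !c (.val false)
  | .ref => if cap then c (.cur true) else c .ref
  | t => c t

/-- The update of the cell at the home position. -/
def Cell.nextHome (c : Cell) (cap : Bool) : Cell
  | .upd _ => false
  | .chg true => c.flip
  | .chg false => c (.chg true)
  | .fin => c.flip
  | t => c.next cap t

/-- The transition table of the deciding program. -/
noncomputable def decTr : State → Cell → State × Cell × Bool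
  | .start, c => (.fetch true true, ((((c.set .home true).set (.chg true) true).set
      (.chg false) true).set (.upd true) true).set (.ptr true) true, true)
  | .lim, c =>
    if c .fin then (.halt, c, true)
    else if !c (.upd true) then
      (.fetch true true, (c.set (.upd true) true).set (.ptr true) true, true)
    else if !c (.upd false) then
      (.fetch false true, (c.set (.upd false) true).set (.ptr false) true, true)
    else if !c (.chg true) && !c (.chg false) then (.halt, c.set .home false, true)
    else (.look, c, true)
  | .halt, c => (.halt, c, true)
  | .fetch m f, c => (.seek m f (c.instr m), c.set (.mark m) true, false)
  | .seek m f i, c =>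
    if c (.ptr m) then
      match i with
      | .inc => (.incw m f, c.set (.ptr m) false, true)
      | .reset => (.rst m f, c.set (.ptr m) false, false)
      | .store => (.ret m true, c.set (.val m) (c (.val m) || f), true)
      | i => (.ret m (i.flag (c (.cur m)) (fun r => c (inpT m r)) f), c, true)
    else (.seek m f i, c, false)
  | .incw m f, c => (.ret m f, c.set (.ptr m) true, false)
  | .rst m f, c => if c .home then (.ret m f, c.set (.ptr m) true, true) else (.rst m f, c, false)
  | .ret m f, c =>
    if c (.mark m) then (.fetch m f, c.set (.mark m) false, true) else (.ret m f, c, true)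
  | .look, c => (.judge (c (.cur false)) (c (.val false)), c, false)
  | .judge a b, c =>
    if c.flip && !a || c.flip && (c (.cur true) == c (.inp 1)) || c.viol a c.flip then
      (.halt, c.set .home false, true)
    else (.sweep (!a && !b) a c.flip, c.nextHome (!a && !b), true)
  | .sweep cap chk fin, c =>
    if c.viol chk fin then (.rej, c, false)
    else if c.flip then (.goHome cap chk fin, (c.next cap).set (.mark true) true, false)
    else (.sweep cap chk fin, c.next cap, true)
  | .goHome cap chk fin, c =>
    if c .home then (.goMark cap chk fin, c.set (.chg true) true, true)
    else (.goHome cap chk fin, c, false)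
  | .goMark cap chk fin, c =>
    if c (.mark true) then (.sweep cap chk fin, c.set (.mark true) false, true)
    else (.goMark cap chk fin, c, true)
  | .rej, c => if c .home then (.halt, c.set .home false, true) else (.rej, c, false)

/-- The deciding program. -/
noncomputable def decProg : Prog State Trk := ⟨.start, .lim, .halt, decTr⟩

/-- The initial tape of the deciding program. -/
def decInit (w : R) (n : ℕ) : Cell
  | .inp i => w (16 * n + i.val)
  | _ => false

theorem encTape_decInit (w : R) :
    encTape Trk.pos (decInit w) = fun n i => if i = 0 then w n else false := by
  funext n i
  rw [Bool.eq_iff_iff]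
  simp only [encTape, encCell, decide_eq_true_eq]
  have hn : 16 * (n / 16) + n % 16 = n := Nat.div_add_mod n 16
  constructor
  · rintro ⟨t, ht, h⟩
    cases t <;> simp only [decInit, Bool.false_eq_true] at h
    simp only [Trk.pos, Prod.mk.injEq] at ht
    obtain ⟨rfl, rfl⟩ := ht
    simpa [Fin.ofNat, hn] using h
  · intro h
    split_ifs at h with hi
    exact ⟨.inp (Fin.ofNat 16 n), by simp [Trk.pos, hi], by simpa [decInit, Fin.ofNat, hn] using h⟩

end ITTM

namespace ITTM

/-! ### Finite and `ω`-long runs -/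

namespace Prog
variable {σ τ : Type} (p : Prog σ τ)

/-- `p` leads from `c` to `c'` in finitely many steps, through configurations satisfying `K`. -/
def Reach (K : Conf σ τ → Prop) (c c' : Conf σ τ) : Prop :=
  ∃ N, p.step^[N] c = c' ∧ ∀ i < N, K (p.step^[i] c)

variable {p} {K : Conf σ τ → Prop} {c c' c'' : Conf σ τ}

theorem Reach.refl : p.Reach K c c := ⟨0, rfl, by simp⟩

theorem Reach.head (h : K c) (hr : p.Reach K (p.step c) c') : p.Reach K c c' := by
  obtain ⟨N, h1, h2⟩ := hr
  refine ⟨N + 1, h1, fun i hi => ?_⟩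
  cases i with
  | zero => exact h
  | succ i => exact h2 i (by omega)

theorem Reach.trans (h : p.Reach K c c') (h' : p.Reach K c' c'') : p.Reach K c c'' := by
  obtain ⟨N, h1, h2⟩ := h
  induction N generalizing c with
  | zero => cases h1; exact h'
  | succ N ih => exact Reach.head (h2 0 (by omega)) (ih h1 fun i hi => h2 (i + 1) (by omega))

theorem Reach.mono {K' : Conf σ τ → Prop} (h : p.Reach K c c') (hK : ∀ c, K c → K' c) :
    p.Reach K' c c' := by
  obtain ⟨N, h1, h2⟩ := h
  exact ⟨N, h1, fun i hi => hK _ (h2 i hi)⟩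

theorem step_eq {q q' : σ} {h : ℕ} {C : ℕ → τ → Bool} {c' : τ → Bool} {d : Bool}
    (htr : p.tr q (C h) = (q', c', d)) :
    p.step ⟨q, h, C⟩ = ⟨q', if d then h + 1 else h - 1, Function.update C h c'⟩ := by
  simp [step, htr]

theorem Reach.walkLeft {q : σ} {C : ℕ → τ → Bool} {l h : ℕ} (hlh : l ≤ h)
    (htr : ∀ j, l < j → j ≤ h → p.tr q (C j) = (q, C j, false))
    (hK : ∀ j, l < j → j ≤ h → K ⟨q, j, C⟩) : p.Reach K ⟨q, h, C⟩ ⟨q, l, C⟩ := by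
  induction h, hlh using Nat.le_induction with
  | base => exact Reach.refl
  | succ h hlh ih =>
    refine Reach.head (hK _ (by omega) le_rfl) ?_
    rw [step_eq (htr _ (by omega) le_rfl), Function.update_eq_self]
    exact ih (fun j h1 h2 => htr j h1 (by omega)) (fun j h1 h2 => hK j h1 (by omega))

theorem Reach.walkRight {q : σ} {C : ℕ → τ → Bool} {l h : ℕ} (hlh : l ≤ h)
    (htr : ∀ j, l ≤ j → j < h → p.tr q (C j) = (q, C j, true))
    (hK : ∀ j, l ≤ j → j < h → K ⟨q, j, C⟩) : p.Reach K ⟨q, l, C⟩ ⟨q, h, C⟩ := by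
  induction h, hlh using Nat.le_induction with
  | base => exact Reach.refl
  | succ h hlh ih =>
    refine (ih (fun j h1 h2 => htr j h1 (by omega)) (fun j h1 h2 => hK j h1 (by omega))).trans ?_
    refine Reach.head (hK _ hlh (by omega)) ?_
    rw [step_eq (htr _ hlh (by omega)), Function.update_eq_self]
    exact Reach.refl

/-- A sequence of checkpoints reached one after the other. -/
theorem exists_of_checkpoints {chk : ℕ → Conf σ τ} {K : ℕ → Conf σ τ → Prop}
    (h : ∀ k, K k (chk k) ∧ p.Reach (K k) (p.step (chk k)) (chk (k + 1))) (k : ℕ) :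
    ∃ n, p.step^[n] (chk 0) = chk k ∧ ∀ i, (n ≤ i → ∃ l ≥ k, K l (p.step^[i] (chk 0))) := by
  have h' : ∀ k, ∃ N, 0 < N ∧ p.step^[N] (chk k) = chk (k + 1) ∧
      ∀ i < N, K k (p.step^[i] (chk k)) := by
    intro k
    obtain ⟨h0, N, h1, h2⟩ := h k
    refine ⟨N + 1, by omega, h1, fun i hi => ?_⟩
    cases i with
    | zero => exact h0
    | succ i => exact h2 i (by omega)
  choose N hN0 hN1 hN2 using h'
  have from_k : ∀ i k, ∃ l ≥ k, K l (p.step^[i] (chk k)) := by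
    intro i
    induction i using Nat.strong_induction_on with
    | _ i ih =>
      intro k
      rcases lt_or_ge i (N k) with hi | hi
      · exact ⟨k, le_rfl, hN2 k i hi⟩
      · obtain ⟨l, hl, hK⟩ := ih (i - N k) (by have := hN0 k; omega) (k + 1)
        refine ⟨l, by omega, ?_⟩
        rwa [← hN1 k, ← Function.iterate_add_apply, Nat.sub_add_cancel hi] at hK
  have reach : ∃ n, p.step^[n] (chk 0) = chk k := by
    induction k with
    | zero => exact ⟨0, rfl⟩
    | succ k ih =>
      obtain ⟨n, hn⟩ := ih
      exact ⟨N k + n, by rw [Function.iterate_add_apply, hn, hN1]⟩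
  obtain ⟨n, hn⟩ := reach
  refine ⟨n, hn, fun i hi => ?_⟩
  obtain ⟨l, hl, hK⟩ := from_k (i - n) k
  refine ⟨l, hl, ?_⟩
  rwa [← hn, ← Function.iterate_add_apply, Nat.sub_add_cancel hi] at hK

theorem isSuccLimit_add_omega (a : Ordinal.{0}) : IsSuccLimit (a + ω) :=
  isSuccLimit_add a isSuccLimit_omega0

/-- The configuration after `ω` many steps through a sequence of checkpoints. -/
theorem run_omega {c₀ : ℕ → τ → Bool} {t : Ordinal.{0}} {chk : ℕ → Conf σ τ}
    {K : ℕ → Conf σ τ → Prop} (ht : p.run c₀ t = chk 0)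
    (h : ∀ k, K k (chk k) ∧ p.Reach (K k) (p.step (chk k)) (chk (k + 1))) :
    (∀ i < ω, ∃ l, K l (p.run c₀ (t + i))) ∧
    ∃ C, p.run c₀ (t + ω) = ⟨p.lim, 0, C⟩ ∧
      ∀ n s v k, (∀ l ≥ k, ∀ c, K l c → c.cell n s = v) → C n s = v := by
  have key := exists_of_checkpoints h
  refine ⟨fun i hi => ?_, _, run_limit _ _ (isSuccLimit_add_omega t), fun n s v k hv => ?_⟩
  · obtain ⟨i, rfl⟩ := lt_omega0.1 hi
    obtain ⟨n, hn, H⟩ := key 0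
    obtain ⟨n, hn⟩ : ∃ l, K l (p.step^[i] (chk 0)) := by
      rcases le_or_gt n i with hni | hni
      · obtain ⟨l, -, hl⟩ := H i hni; exact ⟨l, hl⟩
      · obtain ⟨l, -, hl⟩ := H (n + i) (by omega)
        rw [add_comm, Function.iterate_add_apply, hn] at hl
        exact ⟨l, hl⟩
    exact ⟨n, by rwa [run_add_nat, ht]⟩
  · obtain ⟨n₀, -, H⟩ := key k
    simp only [lsup_add omega0_pos]
    refine lsup_of_eventually (b := n₀) (natCast_lt_omega0 _) fun c hc hcω => ?_
    obtain ⟨i, rfl⟩ := lt_omega0.1 hcω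
    obtain ⟨l, hl, hK⟩ := H i (by exact_mod_cast hc)
    rw [run_add_nat, ht]
    exact hv l hl _ hK

end Prog

end ITTM

namespace ITTM

/-! ### The evaluation passes of the deciding program -/

theorem Cell.set_apply (c : Cell) (t s : Trk) (b : Bool) :
    c.set t b s = if s = t then b else c s := by
  simp [Cell.set, Function.update_apply]

/-- The tape `C` with the marks, pointers and values of mode `m` replaced. -/
noncomputable def passTape (m : Bool) (C : ℕ → Cell) (T P V : R) (n : ℕ) : Cell :=
  (((C n).set (.mark m) (T n)).set (.ptr m) (P n)).set (.val m) (V n)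

section passTape
variable (m : Bool) (C : ℕ → Cell) (T P V : R)

theorem passTape_apply (n : ℕ) (t : Trk) : passTape m C T P V n t =
    if t = .val m then V n else if t = .ptr m then P n else if t = .mark m then T n else C n t := by
  simp [passTape, Cell.set_apply]

theorem update_passTape_mark (h : ℕ) (b : Bool) :
    Function.update (passTape m C T P V) h ((passTape m C T P V h).set (.mark m) b) =
      passTape m C (Function.update T h b) P V := by
  funext n t
  by_cases hn : n = h
  · subst hn
    by_cases ht : t = .mark m <;> simp [Cell.set_apply, passTape_apply, ht]
  · simp [hn, passTape_apply]

theorem update_passTape_ptr (h : ℕ) (b : Bool) :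
    Function.update (passTape m C T P V) h ((passTape m C T P V h).set (.ptr m) b) =
      passTape m C T (Function.update P h b) V := by
  funext n t
  by_cases hn : n = h
  · subst hn
    by_cases ht : t = .ptr m <;> simp [Cell.set_apply, passTape_apply, ht]
  · simp [hn, passTape_apply]

theorem update_passTape_val (h : ℕ) (b : Bool) :
    Function.update (passTape m C T P V) h ((passTape m C T P V h).set (.val m) b) =
      passTape m C T P (Function.update V h b) := by
  funext n t
  by_cases hn : n = h
  · subst hn
    by_cases ht : t = .val m <;> simp [Cell.set_apply, passTape_apply, ht]
  · simp [hn, passTape_apply]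

end passTape

/-- The real with a single bit on, at position `k`. -/
def single (k : ℕ) : R := fun n => decide (n = k)

theorem update_single_self (k : ℕ) : Function.update (single k) k false = zeroR := by
  funext n
  by_cases h : n = k
  · subst h; simp [zeroR]
  · simp [h, zeroR, single]

theorem update_zeroR (k : ℕ) : Function.update zeroR k true = single k := by
  funext n
  by_cases h : n = k
  · subst h; simp [single]
  · simp [h, zeroR, single]

theorem inpT_ne (m : Bool) (r : Fin 8) :
    (∀ m', inpT m r ≠ .val m') ∧ (∀ m', inpT m r ≠ .ptr m') ∧ (∀ m', inpT m r ≠ .mark m') := by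
  cases m <;> simp [inpT]

section EvalPass
variable {m : Bool} {C : ℕ → Cell} {u : R}

/-- The configurations that may occur while instruction `k + 1` is being executed. -/
def EvalInv (m : Bool) (C : ℕ → Cell) (u : R) (k : ℕ) (c : Conf State Trk) : Prop :=
  c.state ≠ .halt ∧ ∃ T P V, c.cell = passTape m C T P V ∧ (∀ n, T n = true → n = k + 1) ∧
    (V = (eng u (fun n => C n (.cur m)) k).v ∨ V = (eng u (fun n => C n (.cur m)) (k + 1)).v)

theorem eval_ret {k h : ℕ} (hh : h ≤ k + 1) (f : Bool) {P V : R}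
    (hV : V = (eng u (fun n => C n (.cur m)) k).v ∨
      V = (eng u (fun n => C n (.cur m)) (k + 1)).v) :
    decProg.Reach (EvalInv m C u k) ⟨.ret m f, h, passTape m C (single (k + 1)) P V⟩
      ⟨.fetch m f, k + 2, passTape m C zeroR P V⟩ := by
  have hK : ∀ j, EvalInv m C u k ⟨.ret m f, j, passTape m C (single (k + 1)) P V⟩ := fun j =>
    ⟨by simp, _, _, _, rfl, fun n hn => by simpa [single] using hn, hV⟩
  refine (Prog.Reach.walkRight hh (fun j _ hj => ?_) fun j _ _ => hK j).trans
    (Prog.Reach.head (hK _) ?_)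
  · have : passTape m C (single (k + 1)) P V j (.mark m) = false := by
      simp [passTape_apply, single]; omega
    simp [decProg, decTr, this]
  · have : passTape m C (single (k + 1)) P V (k + 1) (.mark m) = true := by
      simp [passTape_apply, single]
    rw [Prog.step_eq (q' := .fetch m f) (d := true)
      (c' := (passTape m C (single (k + 1)) P V (k + 1)).set (.mark m) false)
      (by simp [decProg, decTr, this])]
    rw [update_passTape_mark, update_single_self]
    exact Prog.Reach.refl

/-- The checkpoints of an evaluation pass. -/
noncomputable def evalChk (m : Bool) (C : ℕ → Cell) (u : R) (k : ℕ) : Conf State Trk :=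
  let e := eng u (fun n => C n (.cur m)) k
  ⟨.fetch m e.f, k + 1, passTape m C zeroR (single e.p) e.v⟩

theorem eval_chk (hinp : ∀ n r, C n (inpT m r) = block u n r)
    (hhome : ∀ n, C n .home = decide (n = 0)) (k : ℕ) :
    EvalInv m C u k (evalChk m C u k) ∧
      decProg.Reach (EvalInv m C u k) (decProg.step (evalChk m C u k)) (evalChk m C u (k + 1)) := by
  have hle := eng_p_le u (fun n => C n (.cur m)) k
  have hret := fun h hh f P V hV => eval_ret (m := m) (C := C) (u := u) (k := k) (h := h) hh f
    (P := P) (V := V) hV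
  have hinp' : ∀ T P V n r, passTape m C T P V n (inpT m r) = block u n r := fun T P V n r => by
    have := inpT_ne m r
    simp [passTape_apply, this.1, this.2.1, this.2.2, hinp]
  have hinv : ∀ q j P, q ≠ .halt → EvalInv m C u k
      ⟨q, j, passTape m C (single (k + 1)) P (eng u (fun n => C n (.cur m)) k).v⟩ :=
    fun q j P hq => ⟨hq, _, _, _, rfl, fun n hn => by simpa [single] using hn, Or.inl rfl⟩
  have he : eng u (fun n => C n (.cur m)) (k + 1) = (decI (block u (k + 1))).exec
    (fun n => C n (.cur m)) (block u) (eng u (fun n => C n (.cur m)) k) := rfl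
  refine ⟨⟨by simp [evalChk], _, _, _, rfl, by simp [zeroR], Or.inl rfl⟩, ?_⟩
  have hstep : decProg.step (evalChk m C u k) = ⟨.seek m (eng u (fun n => C n (.cur m)) k).f
      (decI (block u (k + 1))), k, passTape m C (single (k + 1))
        (single (eng u (fun n => C n (.cur m)) k).p) (eng u (fun n => C n (.cur m)) k).v⟩ := by
    rw [evalChk, Prog.step_eq (by simp only [decProg, decTr]; rfl), update_passTape_mark,
      update_zeroR]
    simp [Cell.instr, hinp']
  rw [hstep]
  simp only [evalChk]
  generalize decI (block u (k + 1)) = i at he ⊢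
  generalize eng u (fun n => C n (.cur m)) (k + 1) = e' at hret he ⊢
  generalize eng u (fun n => C n (.cur m)) k = e at *
  subst he
  have hptr : ∀ T V j, passTape m C T (single e.p) V j (.ptr m) = decide (j = e.p) := by
    simp [passTape_apply, single]
  have hcur : ∀ T P V j, passTape m C T P V j (.cur m) = C j (.cur m) := by
    simp [passTape_apply]
  refine (Prog.Reach.walkLeft hle (fun j hj _ => ?_) fun j _ _ => hinv _ _ _ (by simp)).trans
    (Prog.Reach.head (hinv _ _ _ (by simp)) ?_)
  · simp [decProg, decTr, hptr, hj.ne']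
  have hpp : passTape m C (single (k + 1)) (single e.p) e.v e.p (.ptr m) = true := by simp [hptr]
  cases i with
  | inc =>
    rw [Prog.step_eq (by simp only [decProg, decTr, hpp, if_true]; rfl), update_passTape_ptr,
      update_single_self, if_pos rfl]
    refine Prog.Reach.head (hinv _ _ _ (by simp)) ?_
    rw [Prog.step_eq (by simp only [decProg, decTr]; rfl), update_passTape_ptr, update_zeroR]
    exact hret _ (by simp; omega) _ _ _ (Or.inl rfl)
  | reset =>
    rw [Prog.step_eq (by simp only [decProg, decTr, hpp, if_true]; rfl), update_passTape_ptr,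
      update_single_self]
    have hhm : ∀ j, passTape m C (single (k + 1)) zeroR e.v j .home = decide (j = 0) := by
      simp [passTape_apply, hhome]
    refine (Prog.Reach.walkLeft (Nat.zero_le _) (fun j hj _ => ?_)
      fun j _ _ => hinv _ _ _ (by simp)).trans (Prog.Reach.head (hinv _ _ _ (by simp)) ?_)
    · simp [decProg, decTr, hhm, hj.ne']
    · rw [Prog.step_eq (q' := .ret m e.f) (d := true) (by simp [decProg, decTr, hhm]; rfl),
        update_passTape_ptr, update_zeroR]
      exact hret _ (by simp) _ _ _ (Or.inl rfl)
  | store =>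
    rw [Prog.step_eq (by simp only [decProg, decTr, hpp, if_true]; rfl), update_passTape_val]
    have : passTape m C (single (k + 1)) (single e.p) e.v e.p (.val m) = e.v e.p := by
      simp [passTape_apply]
    rw [this]
    exact hret _ (by simp; omega) _ _ _ (Or.inr rfl)
  | litD b =>
    rw [Prog.step_eq (by simp only [decProg, decTr, hpp, if_true]; rfl), Function.update_eq_self]
    simp only [hcur, hinp']
    exact hret _ (by simp; omega) _ _ _ (Or.inl rfl)
  | litI r b =>
    rw [Prog.step_eq (by simp only [decProg, decTr, hpp, if_true]; rfl), Function.update_eq_self]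
    simp only [hcur, hinp']
    exact hret _ (by simp; omega) _ _ _ (Or.inl rfl)

/-- The track `t` is scratch space: a mark or a pointer. -/
def Trk.scratch (t : Trk) : Prop := (∃ m, t = .mark m) ∨ ∃ m, t = .ptr m

/-- An evaluation pass computes the operator of the instruction stream. -/
theorem eval_pass (hinp : ∀ n r, C n (inpT m r) = block u n r)
    (hhome : ∀ n, C n .home = decide (n = 0)) {c₀ : ℕ → Cell} {t : Ordinal.{0}}
    (ht : decProg.run c₀ t = ⟨.fetch m true, 1, passTape m C zeroR (single 0) zeroR⟩) :
    ∃ C' : ℕ → Cell, decProg.run c₀ (t + ω) = ⟨.lim, 0, C'⟩ ∧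
      (∀ n s, s ≠ .ptr m → s ≠ .mark m → s ≠ .val m → C' n s = C n s) ∧
      (∀ n, C' n (.mark m) = false) ∧
      (∀ n, C' n (.val m) = oper u (fun n => C n (.cur m)) n) ∧
      ∀ i < ω, (decProg.run c₀ (t + i)).state ≠ .halt ∧
        ∀ n s, ¬ s.scratch → (decProg.run c₀ (t + i)).cell n s = true → C' n s = true := by
  obtain ⟨h1, C', h2, h3⟩ := Prog.run_omega (chk := evalChk m C u) ht (eval_chk hinp hhome)
  have hother : ∀ n s, s ≠ .ptr m → s ≠ .mark m → s ≠ .val m → C' n s = C n s := by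
    intro n s hs1 hs2 hs3
    refine h3 n s _ 0 ?_
    rintro l - c ⟨-, T, P, V, hc, -⟩
    simp [hc, passTape_apply, hs1, hs2, hs3]
  have hval : ∀ n, C' n (.val m) = oper u (fun n => C n (.cur m)) n := by
    intro n
    cases ho : oper u (fun n => C n (.cur m)) n with
    | true =>
      obtain ⟨k, hk⟩ := oper_eq_true.1 ho
      refine h3 n _ _ k ?_
      rintro l hl c ⟨-, T, P, V, hc, -, hV⟩
      simp only [hc, passTape_apply, if_true]
      rcases hV with rfl | rfl
      · exact eng_v_mono _ _ hl _ hk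
      · exact eng_v_mono _ _ (by omega) _ hk
    | false =>
      have ho' : ∀ k, (eng u (fun n => C n (.cur m)) k).v n = false := fun k => by
        by_contra hk
        rw [oper_eq_true.2 ⟨k, by simpa using hk⟩] at ho
        simp at ho
      refine h3 n _ _ 0 ?_
      rintro l hl c ⟨-, T, P, V, hc, -, hV⟩
      simp only [hc, passTape_apply, if_true]
      rcases hV with rfl | rfl <;> exact ho' _
  refine ⟨C', h2, hother, fun n => ?_, hval, fun i hi => ?_⟩
  · refine h3 n _ _ n ?_
    rintro l hl c ⟨-, T, P, V, hc, hT, -⟩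
    simp only [hc, passTape_apply, reduceCtorEq, if_false, if_true]
    by_contra h
    have := hT n (by simpa using h)
    omega
  · obtain ⟨l, hst, T, P, V, hc, -, hV⟩ := h1 i hi
    refine ⟨hst, fun n s hs h => ?_⟩
    rw [hc, passTape_apply] at h
    by_cases hs3 : s = .val m
    · subst hs3
      rw [hval, oper_eq_true]
      rw [if_pos rfl] at h
      rcases hV with rfl | rfl
      exacts [⟨_, h⟩, ⟨_, h⟩]
    · have hs1 : s ≠ .ptr m := fun h => hs (Or.inr ⟨m, h⟩)
      have hs2 : s ≠ .mark m := fun h => hs (Or.inl ⟨m, h⟩)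
      rw [hother n s hs1 hs2 hs3]
      simpa [hs1, hs2, hs3] using h

end EvalPass

end ITTM

namespace ITTM

/-! ### The sweeps of the deciding program -/

section Sweep
variable (C : ℕ → Cell) (cap : Bool)

/-- The cell `j` after a sweep, with `b` written on the track `chg true` of the home cell. -/
noncomputable def sweptCell (b : Bool) (j : ℕ) : Cell :=
  if j = 0 then ((C 0).nextHome cap).set (.chg true) b else (C j).next cap

/-- The tape when the cells before `l` have been swept. -/
noncomputable def sweepTape (l : ℕ) (b : Bool) (j : ℕ) : Cell :=
  if j < l then sweptCell C cap b j else C j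

/-- Whether one of the cells `0, …, n` flips. -/
noncomputable def flipTo (n : ℕ) : Bool := decide (∃ j ≤ n, (C j).flip = true)

theorem flipTo_succ (n : ℕ) : flipTo C (n + 1) = (flipTo C n || (C (n + 1)).flip) := by
  rw [Bool.eq_iff_iff]
  simp only [flipTo, decide_eq_true_eq, Bool.or_eq_true]
  constructor
  · rintro ⟨j, hj, h⟩
    rcases Nat.le_succ_iff.1 hj with hj | rfl
    · exact Or.inl ⟨j, hj, h⟩
    · exact Or.inr h
  · rintro (⟨j, hj, h⟩ | h)
    · exact ⟨j, by omega, h⟩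
    · exact ⟨n + 1, le_rfl, h⟩

/-- The configurations that may occur while the cell `n + 1` is being swept. -/
def SweepInv (n : ℕ) (c : Conf State Trk) : Prop :=
  c.state ≠ .halt ∧ (∃ b, (b = flipTo C n ∨ b = flipTo C (n + 1)) ∧
      ∀ j ≤ n, c.cell j = sweptCell C cap b j) ∧
    (∀ j, n + 1 < j → c.cell j = C j) ∧
    ∀ t, ¬ t.scratch → c.cell (n + 1) t = C (n + 1) t ∨ c.cell (n + 1) t = (C (n + 1)).next cap t

/-- The checkpoints of a sweep. -/
noncomputable def sweepChk (chk fin : Bool) (n : ℕ) : Conf State Trk :=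
  ⟨.sweep cap chk fin, n + 1, sweepTape C cap (n + 1) (flipTo C n)⟩

variable {C cap} {chk fin : Bool}

theorem sweepInv_chk (n : ℕ) : SweepInv C cap n (sweepChk C cap chk fin n) := by
  refine ⟨by simp [sweepChk], ⟨_, Or.inl rfl, fun j hj => ?_⟩, fun j hj => ?_,
    fun t _ => Or.inl ?_⟩
  · simp [sweepChk, sweepTape, Nat.lt_succ_of_le hj]
  · simp [sweepChk, sweepTape, show ¬ j < n + 1 by omega]
  · simp [sweepChk, sweepTape]

theorem sweptCell_home (hhome : ∀ n, C n .home = decide (n = 0)) (b : Bool) (j : ℕ) :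
    sweptCell C cap b j .home = decide (j = 0) := by
  unfold sweptCell
  split_ifs with h
  · subst h; simp [Cell.set_apply, Cell.nextHome, Cell.next, hhome]
  · simp [Cell.next, hhome]

theorem sweptCell_mark (b : Bool) (j : ℕ) (m : Bool) : sweptCell C cap b j (.mark m) = false := by
  unfold sweptCell
  split_ifs with h
  · simp [Cell.set_apply, Cell.nextHome, Cell.next]
  · simp [Cell.next]

theorem update_sweepTape {n : ℕ} (b : Bool) :
    Function.update (sweepTape C cap (n + 1) b) (n + 1) ((C (n + 1)).next cap) =
      sweepTape C cap (n + 2) b := by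
  funext j
  by_cases hj : j = n + 1
  · subst hj; simp [sweepTape, sweptCell]
  · have : j < n + 2 ↔ j < n + 1 := by omega
    simp [hj, sweepTape, this]

theorem sweep_chk (hhome : ∀ n, C n .home = decide (n = 0)) (n : ℕ)
    (hviol : (C (n + 1)).viol chk fin = false) :
    decProg.Reach (SweepInv C cap n) (decProg.step (sweepChk C cap chk fin n))
      (sweepChk C cap chk fin (n + 1)) := by
  have hcell : sweepTape C cap (n + 1) (flipTo C n) (n + 1) = C (n + 1) := by simp [sweepTape]
  cases hflip : (C (n + 1)).flip with
  | false =>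
    rw [sweepChk, Prog.step_eq (q' := .sweep cap chk fin) (c' := (C (n + 1)).next cap) (d := true)
      (by simp [decProg, decTr, hcell, hflip, hviol]), update_sweepTape]
    rw [sweepChk, flipTo_succ, hflip, Bool.or_false]
    exact Prog.Reach.refl
  | true =>
    set Z : Bool → ℕ → Cell := fun b => Function.update (sweepTape C cap (n + 1) b) (n + 1)
      (((C (n + 1)).next cap).set (.mark true) true) with hZ
    have hZlt : ∀ b j, j ≤ n → Z b j = sweptCell C cap b j := fun b j hj => by
      simp [hZ, show j ≠ n + 1 by omega, sweepTape, show j < n + 1 by omega]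
    have hinv : ∀ q j b, q ≠ .halt → (b = flipTo C n ∨ b = flipTo C (n + 1)) →
        SweepInv C cap n ⟨q, j, Z b⟩ := by
      refine fun q j b hq hb => ⟨hq, ⟨b, hb, hZlt b⟩, fun j hj => ?_, fun t ht => Or.inr ?_⟩
      · simp [hZ, show j ≠ n + 1 by omega, sweepTape, show ¬ j < n + 1 by omega]
      · have : t ≠ .mark true := fun h => ht (Or.inl ⟨_, h⟩)
        simp [hZ, Cell.set_apply, this]
    have htrue : flipTo C (n + 1) = true := by simp [flipTo_succ, hflip]
    rw [sweepChk, Prog.step_eq (q' := .goHome cap chk fin)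
      (c' := ((C (n + 1)).next cap).set (.mark true) true) (d := false)
      (by simp [decProg, decTr, hcell, hflip, hviol])]
    change decProg.Reach _ ⟨_, n, Z (flipTo C n)⟩ _
    refine (Prog.Reach.walkLeft (Nat.zero_le _) (fun j hj hjn => ?_)
      fun j _ _ => hinv _ _ _ (by simp) (Or.inl rfl)).trans
      (Prog.Reach.head (hinv _ _ _ (by simp) (Or.inl rfl)) ?_)
    · simp [decProg, decTr, hZlt _ _ hjn, sweptCell_home hhome, hj.ne']
    rw [Prog.step_eq (q' := .goMark cap chk fin) (d := true)
      (by simp [decProg, decTr, hZlt, sweptCell_home hhome]; rfl)]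
    have hupd : Function.update (Z (flipTo C n)) 0
        ((sweptCell C cap (flipTo C n) 0).set (.chg true) true) = Z true := by
      funext j t
      by_cases hj : j = 0
      · subst hj
        by_cases ht : t = .chg true <;> simp [hZlt, sweptCell, Cell.set_apply, ht]
      · by_cases hj' : j = n + 1
        · subst hj'; simp [hZ]
        · simp [hZ, hj, hj', sweepTape, sweptCell]
    rw [hupd]
    refine (Prog.Reach.walkRight (h := n + 1) (by simp) (fun j _ hjn => ?_)
      fun j _ _ => hinv _ _ _ (by simp) (Or.inr htrue.symm)).trans
      (Prog.Reach.head (hinv _ _ _ (by simp) (Or.inr htrue.symm)) ?_)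
    · simp [decProg, decTr, hZlt _ j (by omega), sweptCell_mark]
    have hZm : Z true (n + 1) = ((C (n + 1)).next cap).set (.mark true) true := by simp [hZ]
    rw [Prog.step_eq (q' := .sweep cap chk fin) (d := true)
      (c' := ((C (n + 1)).next cap))]
    · simp only [hZ, Function.update_idem, update_sweepTape, sweepChk, htrue]
      exact Prog.Reach.refl
    · simp only [decProg, decTr, hZm, Cell.set_apply, if_true]
      simp only [Prod.mk.injEq, true_and, and_true]
      funext t
      by_cases ht : t = .mark true
      · subst ht; simp [Cell.set_apply, Cell.next]
      · simp [Cell.set_apply, ht]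

theorem sweptCell_congr {b b' : Bool} {j : ℕ} {t : Trk} (h : j = 0 → t ≠ .chg true) :
    sweptCell C cap b j t = sweptCell C cap b' j t := by
  unfold sweptCell
  split_ifs with hj
  · simp [Cell.set_apply, h hj]
  · rfl

/-- A sweep that finds no violation. -/
theorem sweep_pass (hhome : ∀ n, C n .home = decide (n = 0))
    (hviol : ∀ n, (C (n + 1)).viol chk fin = false) {c₀ : ℕ → Cell} {t : Ordinal.{0}}
    (ht : decProg.run c₀ t = sweepChk C cap chk fin 0) :
    decProg.run c₀ (t + ω) =
        ⟨.lim, 0, sweptCell C cap (decide (∃ n, (C n).flip = true))⟩ ∧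
      ∀ i < ω, (decProg.run c₀ (t + i)).state ≠ .halt ∧
        ∀ n s, ¬ s.scratch → (decProg.run c₀ (t + i)).cell n s = true →
          C n s = true ∨ sweptCell C cap (decide (∃ n, (C n).flip = true)) n s = true := by
  obtain ⟨h1, C', h2, h3⟩ := Prog.run_omega (chk := sweepChk C cap chk fin) ht
    fun k => ⟨sweepInv_chk k, sweep_chk hhome k (hviol k)⟩
  refine ⟨?_, fun i hi => ?_⟩
  · rw [h2]
    congr 1
    funext n s
    by_cases hs : n = 0 ∧ s = .chg true
    · obtain ⟨rfl, rfl⟩ := hs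
      simp only [sweptCell, if_true, Cell.set_apply]
      by_cases hf : ∃ n, (C n).flip = true
      · obtain ⟨k, hk⟩ := hf
        refine h3 _ _ _ k ?_
        rintro l hl c ⟨-, ⟨b, hb, hc⟩, -⟩
        have hb' : b = true := by
          rcases hb with rfl | rfl
          · simp only [flipTo, decide_eq_true_eq]; exact ⟨k, hl, hk⟩
          · simp only [flipTo, decide_eq_true_eq]; exact ⟨k, by omega, hk⟩
        simp [hc, sweptCell, Cell.set_apply, hb']
        exact ⟨k, hk⟩
      · refine h3 _ _ _ 0 ?_
        rintro l hl c ⟨-, ⟨b, hb, hc⟩, -⟩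
        simp only [not_exists] at hf
        have hb' : b = false := by
          rcases hb with rfl | rfl <;> simp [flipTo, hf]
        simp [hc, sweptCell, Cell.set_apply, hb', hf]
    · refine h3 _ _ _ n ?_
      rintro l hl c ⟨-, ⟨b, hb, hc⟩, -⟩
      rw [hc n hl]
      exact sweptCell_congr fun h h' => hs ⟨h, h'⟩
  · obtain ⟨l, hst, ⟨b, hb, hc⟩, hc', hc''⟩ := h1 i hi
    refine ⟨hst, fun n s hs h => ?_⟩
    rcases lt_trichotomy n (l + 1) with hn | rfl | hn
    · rw [hc n (by omega)] at h
      right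
      by_cases hs : n = 0 ∧ s = .chg true
      · obtain ⟨rfl, rfl⟩ := hs
        simp only [sweptCell, if_true, Cell.set_apply] at h ⊢
        subst h
        simp only [flipTo] at hb
        rcases hb with hb | hb
        all_goals
          obtain ⟨k, -, hk⟩ := of_decide_eq_true hb.symm
          exact decide_eq_true ⟨k, hk⟩
      · rwa [sweptCell_congr fun h h' => hs ⟨h, h'⟩] at h
    · rcases hc'' s hs with h' | h'
      · exact Or.inl (h' ▸ h)
      · right
        rw [h'] at h
        simpa [sweptCell] using h
    · exact Or.inl (hc' n hn ▸ h)

/-- A sweep that finds a violation. -/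
theorem sweep_rej (hhome : ∀ n, C n .home = decide (n = 0))
    (hviol : ∃ n, (C (n + 1)).viol chk fin = true) :
    ∃ c, decProg.Reach (fun c => c.state ≠ .halt) (sweepChk C cap chk fin 0) c ∧
      c.state = .halt ∧ ∀ n, c.cell n .home = false := by
  obtain ⟨n, hn, hmin⟩ : ∃ n, (C (n + 1)).viol chk fin = true ∧
      ∀ k < n, (C (k + 1)).viol chk fin = false :=
    ⟨Nat.find hviol, Nat.find_spec hviol, fun k hk => by simpa using Nat.find_min hviol hk⟩
  have hreach : ∀ k ≤ n, decProg.Reach (fun c => c.state ≠ .halt) (sweepChk C cap chk fin 0)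
      (sweepChk C cap chk fin k) := by
    intro k hk
    induction k with
    | zero => exact Prog.Reach.refl
    | succ k ih =>
      exact (ih (by omega)).trans (Prog.Reach.head (by simp [sweepChk])
        ((sweep_chk hhome k (hmin k (by omega))).mono fun c h => h.1))
  have hcell : sweepTape C cap (n + 1) (flipTo C n) (n + 1) = C (n + 1) := by simp [sweepTape]
  have hupd : Function.update (sweepTape C cap (n + 1) (flipTo C n)) (n + 1) (C (n + 1)) =
      sweepTape C cap (n + 1) (flipTo C n) := by
    conv_lhs => rw [← hcell]
    exact Function.update_eq_self _ _
  have hhm : ∀ j, sweepTape C cap (n + 1) (flipTo C n) j .home = decide (j = 0) := by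
    intro j
    unfold sweepTape
    split_ifs
    · exact sweptCell_home hhome _ _
    · exact hhome j
  refine ⟨_, (hreach n le_rfl).trans (Prog.Reach.head (by simp [sweepChk])
    (c' := ⟨.halt, 1, Function.update (sweepTape C cap (n + 1) (flipTo C n)) 0
      ((sweepTape C cap (n + 1) (flipTo C n) 0).set .home false)⟩) ?_), rfl, fun j => ?_⟩
  · rw [sweepChk, Prog.step_eq (q' := .rej) (c' := C (n + 1)) (d := false)
      (by simp [decProg, decTr, hcell, hn])]
    rw [hupd]
    refine (Prog.Reach.walkLeft (Nat.zero_le _) (fun j hj hjn => ?_)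
      fun j _ _ => by simp).trans (Prog.Reach.head (by simp) ?_)
    · simp [decProg, decTr, hhm, hj.ne']
    · rw [Prog.step_eq (q' := .halt) (d := true) (by simp [decProg, decTr, hhm]; rfl)]
      exact Prog.Reach.refl
  · by_cases hj : j = 0
    · subst hj; simp [Cell.set_apply]
    · simp [hj, hhm]

end Sweep

end ITTM

namespace ITTM

/-! ### Stages of the decision procedure -/

/-- The data on the tape of the deciding program at the beginning of a stage. -/
structure Sup where
  d : Bool → R
  v : Bool → R
  e : R
  chg : Bool → Bool

/-- The component of a real belonging to a mode. -/
def comp (w : R) (m : Bool) : R := if m then leftR w else rightR w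

namespace Sup

/-- The element `n` of the clock relation is enumerated at the present stage. -/
def flip (Y : Sup) (n : ℕ) : Bool := !Y.d false n && !Y.v false n

/-- The reasons for rejecting an input. -/
def Bad (w : R) (Y : Sup) : Prop :=
  (Y.chg true = false ∧ Y.chg false = false) ∨ (Y.flip 0 = true ∧ Y.d false 1 = false) ∨
  (Y.flip 0 = true ∧ Y.d true 0 = w 1) ∨
  (Y.d false 1 = true ∧ ∃ n, Y.d true n = true ∧ Y.e n = false) ∨
  (Y.flip 0 = true ∧ ∃ n, Y.d true n ≠ Y.e n)

/-- The condition for continuing with the next stage. -/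
def Cont (w : R) (Y : Sup) : Prop := ¬ Y.Bad w ∧ Y.flip 0 = false

/-- The condition for accepting an input. -/
def Acc (w : R) (Y : Sup) : Prop := ¬ Y.Bad w ∧ Y.flip 0 = true

/-- The data at the next stage. -/
noncomputable def next (w : R) (Y : Sup) : Sup where
  d := fun m n => if m then Y.v true n else Y.d false n || !Y.v false n
  v := fun m => oper (comp w m) (fun n => if m then Y.v true n else Y.d false n || !Y.v false n)
  e := fun n => if Y.flip 1 then Y.d true n else Y.e n
  chg := fun m => if m then decide (∃ n, Y.flip n = true) else Y.chg true

/-- The data at a limit stage. -/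
noncomputable def lim (f : Ordinal.{0} → Sup) (a : Ordinal.{0}) : Sup where
  d := fun m n => lsup (fun b => (f b).d m n) a
  v := fun m n => lsup (fun b => (f b).v m n) a
  e := fun n => lsup (fun b => (f b).e n) a
  chg := fun m => lsup (fun b => (f b).chg m) a

/-- The data at the initial stage. -/
noncomputable def init (w : R) : Sup where
  d := fun _ => zeroR
  v := fun m => oper (comp w m) zeroR
  e := zeroR
  chg := fun _ => true

/-- The data at all stages. -/
noncomputable def stage (w : R) : Ordinal.{0} → Sup := titer (init w) (next w) lim

theorem stage_zero (w : R) : stage w 0 = init w := titer_zero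

theorem stage_add_one (w : R) (a : Ordinal.{0}) : stage w (a + 1) = next w (stage w a) :=
  titer_add_one a

theorem stage_limit (w : R) {a : Ordinal.{0}} (ha : IsSuccLimit a) :
    stage w a = lim (stage w) a := by
  refine titer_limit (fun f g a h => ?_) ha
  simp only [lim, Sup.mk.injEq]
  refine ⟨?_, ?_, ?_, ?_⟩ <;> funext <;> exact lsup_congr fun b hb => by rw [h b hb]

end Sup

/-- The tape contents at the beginning of a stage. -/
structure Rep (w : R) (Y : Sup) (C : ℕ → Cell) : Prop where
  inp : ∀ n i, C n (.inp i) = w (16 * n + i.val)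
  home : ∀ n, C n .home = decide (n = 0)
  cur : ∀ m n, C n (.cur m) = Y.d m n
  val : ∀ m n, C n (.val m) = Y.v m n
  ref : ∀ n, C n .ref = Y.e n
  upd : ∀ m, C 0 (.upd m) = true
  chg : ∀ m, C 0 (.chg m) = Y.chg m
  fin : C 0 .fin = false

theorem block_comp {w : R} {C : ℕ → Cell} (h : ∀ n i, C n (.inp i) = w (16 * n + i.val))
    (m : Bool) (n : ℕ) (r : Fin 8) : C n (inpT m r) = block (comp w m) n r := by
  have := r.isLt
  cases m
  · simp only [inpT, h, block, comp, rightR, Fin.ofNat, Bool.false_eq_true, if_false]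
    congr 1; omega
  · simp only [inpT, h, block, comp, leftR, Fin.ofNat, if_true]
    congr 1; omega

theorem omega0_mul_two : (ω : Ordinal.{0}) * 2 = ω + ω := by
  rw [← one_add_one_eq_two, mul_add, mul_one]

theorem lt_omega_mul_two {i : Ordinal.{0}} (hi : i < ω * 2) :
    i < ω ∨ i = ω ∨ ∃ j < ω, i = ω + 1 + j := by
  rcases lt_or_ge i ω with h | h
  · exact Or.inl h
  obtain ⟨j, rfl⟩ := exists_add_of_le h
  have hj : j < ω := by
    rw [omega0_mul_two] at hi
    exact (add_lt_add_iff_left _).1 hi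
  obtain ⟨k, rfl⟩ := lt_omega0.1 hj
  cases k with
  | zero => right; left; simp
  | succ k =>
    right; right
    refine ⟨k, natCast_lt_omega0 k, ?_⟩
    rw [add_assoc]
    congr 1
    norm_cast
    omega

section Passes
variable {w : R} {c₀ : ℕ → Cell} {t : Ordinal.{0}} {C : ℕ → Cell}

/-- Two evaluation passes in a row. -/
theorem both_passes (hinp : ∀ n i, C n (.inp i) = w (16 * n + i.val))
    (hhome : ∀ n, C n .home = decide (n = 0)) (hfin : C 0 .fin = false)
    (hupd : C 0 (.upd true) = true) (hupd' : C 0 (.upd false) = false)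
    (hmark : ∀ n, C n (.mark false) = false) (hptr : ∀ n, C n (.ptr false) = false)
    (hval : ∀ n, C n (.val false) = false)
    (ht : decProg.run c₀ t = ⟨.fetch true true, 1, passTape true C zeroR (single 0) zeroR⟩) :
    ∃ C' : ℕ → Cell, decProg.run c₀ (t + ω * 2) = ⟨.lim, 0, C'⟩ ∧
      (∀ n s, ¬ s.scratch → (∀ m, s ≠ .val m) → (n = 0 → s ≠ .upd false) → C' n s = C n s) ∧
      C' 0 (.upd false) = true ∧
      (∀ m n, C' n (.val m) = oper (comp w m) (fun n => C n (.cur m)) n) ∧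
      ∀ i < ω * 2, (decProg.run c₀ (t + i)).state ≠ .halt ∧
        ∀ n s, ¬ s.scratch → (decProg.run c₀ (t + i)).cell n s = true → C' n s = true := by
  obtain ⟨C₁, h1, h2, h3, h4, h5⟩ := eval_pass (block_comp hinp true) hhome ht
  set C₂ : ℕ → Cell := Function.update C₁ 0 ((C₁ 0).set (.upd false) true) with hC₂
  have hC₂' : ∀ n s, (n = 0 → s ≠ .upd false) → C₂ n s = C₁ n s := by
    intro n s h
    by_cases hn : n = 0
    · subst hn; simp [hC₂, Cell.set_apply, h]
    · simp [hC₂, hn]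
  have hC₂'' : C₂ 0 (.upd false) = true := by simp [hC₂, Cell.set_apply]
  have ht' : decProg.run c₀ (t + ω + 1) =
      ⟨.fetch false true, 1, passTape false C₂ zeroR (single 0) zeroR⟩ := by
    rw [Prog.run_add_one, h1, Prog.step_eq (q' := .fetch false true)
      (c' := ((C₁ 0).set (.upd false) true).set (.ptr false) true) (d := true)
      (by simp [decProg, decTr, h2, hfin, hupd, hupd'])]
    simp only [if_true, zero_add, Conf.mk.injEq, true_and]
    funext n s
    rw [passTape_apply]
    have hv := h2 n (.val false) (by simp) (by simp) (by simp)
    have hm := h2 n (.mark false) (by simp) (by simp) (by simp)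
    have hp := h2 n (.ptr false) (by simp) (by simp) (by simp)
    rw [hval] at hv
    rw [hmark] at hm
    rw [hptr] at hp
    by_cases hn : n = 0
    · subst hn
      split_ifs with hs hs' hs''
      · subst hs; simp [Cell.set_apply, hv, zeroR]
      · subst hs'; simp [Cell.set_apply, single]
      · subst hs''; simp [Cell.set_apply, hm, zeroR]
      · simp [Cell.set_apply, hs', hC₂]
    · split_ifs with hs hs' hs''
      · subst hs; simp [hn, hv, zeroR]
      · subst hs'; simp [hn, hp, single]
      · subst hs''; simp [hn, hm, zeroR]
      · simp [hn, hC₂]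
  have hinp₂ : ∀ n i, C₂ n (.inp i) = w (16 * n + i.val) := fun n i => by
    rw [hC₂' _ _ (by simp), h2 _ _ (by simp) (by simp) (by simp), hinp]
  have hhome₂ : ∀ n, C₂ n .home = decide (n = 0) := fun n => by
    rw [hC₂' _ _ (by simp), h2 _ _ (by simp) (by simp) (by simp), hhome]
  obtain ⟨C', g1, g2, g3, g4, g5⟩ := eval_pass (block_comp hinp₂ false) hhome₂ ht'
  have htime : t + ω + 1 + ω = t + ω * 2 := by
    rw [add_assoc, one_add_omega0, add_assoc, omega0_mul_two]
  have hgen : ∀ n s, ¬ s.scratch → s ≠ .val false → C₁ n s = true → C' n s = true := by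
    intro n s hs hs' h
    rw [g2 n s (fun h => hs (Or.inr ⟨_, h⟩)) (fun h => hs (Or.inl ⟨_, h⟩)) hs']
    by_cases hn : n = 0 ∧ s = .upd false
    · rw [hn.1, hn.2, hC₂'']
    · rw [hC₂' _ _ fun h h' => hn ⟨h, h'⟩, h]
  have hgen' : ∀ n s, ¬ s.scratch → C₁ n s = true → C' n s = true := by
    intro n s hs h
    by_cases hs' : s = .val false
    · subst hs'
      rw [h2 _ _ (by simp) (by simp) (by simp), hval] at h
      simp at h
    · exact hgen n s hs hs' h
  refine ⟨C', htime ▸ g1, fun n s hs hs' hs'' => ?_, ?_, fun m n => ?_, fun i hi => ?_⟩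
  · rw [g2 n s (fun h => hs (Or.inr ⟨_, h⟩)) (fun h => hs (Or.inl ⟨_, h⟩)) (hs' _), hC₂' n s hs'',
      h2 n s (fun h => hs (Or.inr ⟨_, h⟩)) (fun h => hs (Or.inl ⟨_, h⟩)) (hs' _)]
  · rw [g2 _ _ (by simp) (by simp) (by simp), hC₂'']
  · cases m
    · rw [g4]
      congr 1
      funext n
      rw [hC₂' _ _ (by simp), h2 _ _ (by simp) (by simp) (by simp)]
    · rw [g2 _ _ (by simp) (by simp) (by simp), hC₂' _ _ (by simp), h4]
  · rcases lt_omega_mul_two hi with hi | rfl | ⟨j, hj, rfl⟩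
    · exact ⟨(h5 i hi).1, fun n s hs h => hgen' n s hs ((h5 i hi).2 n s hs h)⟩
    · rw [h1]
      exact ⟨by simp, fun n s hs h => hgen' n s hs h⟩
    · rw [← add_assoc, ← add_assoc]
      exact g5 j hj

end Passes

end ITTM

namespace ITTM

/-! ### One stage of the decision procedure -/

section Stage
variable {w : R} {Y : Sup} {c₀ : ℕ → Cell} {t : Ordinal.{0}} {C : ℕ → Cell}

theorem Rep.flip (h : Rep w Y C) (n : ℕ) : (C n).flip = Y.flip n := by
  simp [Cell.flip, Sup.flip, h.cur, h.val]

theorem Rep.viol (h : Rep w Y C) (chk fin : Bool) (n : ℕ) :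
    (C n).viol chk fin = (chk && Y.d true n && !Y.e n || fin && (Y.d true n != Y.e n)) := by
  simp [Cell.viol, h.cur, h.ref]

/-- A stage begins with an inspection of the first two cells. -/
theorem Rep.inspect (h : Rep w Y C) (ht : decProg.run c₀ t = ⟨.lim, 0, C⟩)
    (hchg : ¬ (Y.chg true = false ∧ Y.chg false = false)) :
    decProg.run c₀ (t + 1) = ⟨.look, 1, C⟩ ∧
    decProg.run c₀ (t + 2) = ⟨.judge (Y.d false 1) (Y.v false 1), 0, C⟩ := by
  have h1 : decProg.run c₀ (t + 1) = ⟨.look, 1, C⟩ := by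
    rw [Prog.run_add_one, ht, Prog.step_eq (q' := .look) (c' := C 0) (d := true),
      Function.update_eq_self]
    · simp
    · simp only [decProg, decTr, h.fin, h.upd, h.chg]
      rcases Bool.eq_false_or_eq_true (Y.chg true) with h1 | h1 <;>
      rcases Bool.eq_false_or_eq_true (Y.chg false) with h2 | h2 <;> simp_all
  refine ⟨h1, ?_⟩
  rw [← one_add_one_eq_two, ← add_assoc, Prog.run_add_one, h1,
    Prog.step_eq (q' := .judge (Y.d false 1) (Y.v false 1)) (c' := C 1) (d := false),
    Function.update_eq_self]
  · simp
  · simp [decProg, decTr, h.cur, h.val]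

theorem sweepChk_zero (cap chk fin : Bool) : sweepChk C cap chk fin 0 =
    ⟨.sweep cap chk fin, 1, Function.update C 0 ((C 0).nextHome cap)⟩ := by
  simp only [sweepChk, Conf.mk.injEq, true_and]
  funext j s
  by_cases hj : j = 0
  · subst hj
    by_cases hs : s = .chg true
    · subst hs; simp [sweepTape, sweptCell, Cell.set_apply, Cell.nextHome, flipTo]
    · simp [sweepTape, sweptCell, Cell.set_apply, hs]
  · simp [sweepTape, hj]

theorem Rep.judge (h : Rep w Y C) (ht : decProg.run c₀ t = ⟨.lim, 0, C⟩)
    (hchg : ¬ (Y.chg true = false ∧ Y.chg false = false))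
    (hj : ¬ (Y.flip 0 = true ∧ Y.d false 1 = false) ∧ ¬ (Y.flip 0 = true ∧ Y.d true 0 = w 1) ∧
      (C 0).viol (Y.d false 1) (Y.flip 0) = false) :
    decProg.run c₀ (t + 3) = sweepChk C (Y.flip 1) (Y.d false 1) (Y.flip 0) 0 := by
  rw [show (3 : Ordinal.{0}) = 2 + 1 by norm_num, ← add_assoc, Prog.run_add_one,
    (h.inspect ht hchg).2, sweepChk_zero,
    Prog.step_eq (q' := .sweep (Y.flip 1) (Y.d false 1) (Y.flip 0))
      (c' := (C 0).nextHome (Y.flip 1)) (d := true)]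
  · simp
  · have hw : C 0 (.inp 1) = w 1 := by simp [h.inp]
    obtain ⟨h1, h2, h3⟩ := hj
    simp only [decProg, decTr, h.flip, h3, hw, h.cur]
    rw [if_neg]
    · rfl
    · rintro h'
      simp only [Bool.or_false, Bool.or_eq_true, Bool.and_eq_true, Bool.not_eq_true',
        beq_iff_eq] at h'
      tauto

/-- A bad stage leads to rejection. -/
theorem Rep.rej (h : Rep w Y C) (ht : decProg.run c₀ t = ⟨.lim, 0, C⟩) (hbad : Y.Bad w) :
    ∃ k : ℕ, (decProg.run c₀ (t + k)).state = .halt ∧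
      (∀ n, (decProg.run c₀ (t + k)).cell n .home = false) ∧
      ∀ i < k, (decProg.run c₀ (t + i)).state ≠ .halt := by
  have hhalt : ∀ n, Function.update C 0 ((C 0).set .home false) n .home = false := by
    intro n
    by_cases hn : n = 0
    · subst hn; simp [Cell.set_apply]
    · simp [hn, h.home]
  by_cases hchg : Y.chg true = false ∧ Y.chg false = false
  · have h1 : decProg.run c₀ (t + (1 : ℕ)) =
        ⟨.halt, 1, Function.update C 0 ((C 0).set .home false)⟩ := by
      rw [Nat.cast_one, Prog.run_add_one, ht, Prog.step_eq (q' := .halt)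
        (c' := (C 0).set .home false) (d := true)]
      · simp
      · simp [decProg, decTr, h.fin, h.upd, h.chg, hchg]
    refine ⟨1, by rw [h1], fun n => by rw [h1]; exact hhalt n, fun i hi => ?_⟩
    obtain rfl : i = 0 := by omega
    simp [ht]
  obtain ⟨hi1, hi2⟩ := h.inspect ht hchg
  by_cases hj : ¬ (Y.flip 0 = true ∧ Y.d false 1 = false) ∧
      ¬ (Y.flip 0 = true ∧ Y.d true 0 = w 1) ∧ (C 0).viol (Y.d false 1) (Y.flip 0) = false
  · have h3 := h.judge ht hchg hj
    have hviol : ∃ n, (C (n + 1)).viol (Y.d false 1) (Y.flip 0) = true := by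
      have hex : ∃ n, (C n).viol (Y.d false 1) (Y.flip 0) = true := by
        rcases hbad with hb | hb | hb | ⟨hb, n, h1, h2⟩ | ⟨hb, n, h1⟩
        · exact absurd hb hchg
        · exact absurd hb hj.1
        · exact absurd hb hj.2.1
        · exact ⟨n, by simp [h.viol, hb, h1, h2]⟩
        · exact ⟨n, by simp [h.viol, hb, h1]⟩
      obtain ⟨n, hn⟩ := hex
      cases n with
      | zero => rw [hj.2.2] at hn; simp at hn
      | succ n => exact ⟨n, hn⟩
    obtain ⟨c, ⟨N, hN, hN'⟩, hc, hc'⟩ := sweep_rej (cap := Y.flip 1) h.home hviol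
    have hrun : ∀ i : ℕ, decProg.run c₀ (t + ((3 + i : ℕ) : Ordinal.{0})) =
        decProg.step^[i] (sweepChk C (Y.flip 1) (Y.d false 1) (Y.flip 0) 0) := by
      intro i
      rw [Nat.cast_add, ← add_assoc, Prog.run_add_nat]
      congr 1
    refine ⟨3 + N, by rw [hrun, hN, hc], fun n => by rw [hrun, hN, hc'], fun i hi => ?_⟩
    rcases lt_or_ge i 3 with hi3 | hi3
    · interval_cases i
      · simp [ht]
      · rw [Nat.cast_one, hi1]; simp
      · rw [Nat.cast_two, hi2]; simp
    · obtain ⟨i, rfl⟩ := Nat.exists_eq_add_of_le hi3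
      rw [hrun]
      exact hN' i (by omega)
  · have h3 : decProg.run c₀ (t + (3 : ℕ)) =
        ⟨.halt, 1, Function.update C 0 ((C 0).set .home false)⟩ := by
      rw [Nat.cast_ofNat, show (3 : Ordinal.{0}) = 2 + 1 by norm_num, ← add_assoc,
        Prog.run_add_one, hi2, Prog.step_eq (q' := .halt) (c' := (C 0).set .home false) (d := true)]
      · simp
      · have hw : C 0 (.inp 1) = w 1 := by simp [h.inp]
        simp only [decProg, decTr, h.flip, hw, h.cur]
        rw [if_pos]
        by_contra hne
        refine hj ?_
        simpa only [Bool.or_eq_true, Bool.and_eq_true, Bool.not_eq_true', not_or, and_assoc,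
          beq_iff_eq, Bool.not_eq_true] using hne
    refine ⟨3, by rw [h3], fun n => by rw [h3]; exact hhalt n, fun i hi => ?_⟩
    interval_cases i
    · simp [ht]
    · rw [Nat.cast_one, hi1]; simp
    · rw [Nat.cast_two, hi2]; simp

/-- The sweep in a stage that is not bad. -/
theorem Rep.sweep (h : Rep w Y C) (ht : decProg.run c₀ t = ⟨.lim, 0, C⟩) (hbad : ¬ Y.Bad w) :
    decProg.run c₀ (t + ω) = ⟨.lim, 0, sweptCell C (Y.flip 1) (decide (∃ n, Y.flip n = true))⟩ ∧
      ∀ i < ω, (decProg.run c₀ (t + i)).state ≠ .halt ∧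
        ∀ n s, ¬ s.scratch → (decProg.run c₀ (t + i)).cell n s = true →
          C n s = true ∨
            sweptCell C (Y.flip 1) (decide (∃ n, Y.flip n = true)) n s = true := by
  simp only [Sup.Bad, not_or, not_and, not_exists] at hbad
  obtain ⟨b1, b2, b3, b4, b5⟩ := hbad
  have hviol : ∀ n, (C n).viol (Y.d false 1) (Y.flip 0) = false := by
    intro n
    rw [h.viol]
    by_contra hne
    simp only [Bool.not_eq_false, Bool.or_eq_true, Bool.and_eq_true, Bool.not_eq_true',
      bne_iff_ne] at hne
    rcases hne with ⟨⟨h1, h2⟩, h3⟩ | ⟨h1, h2⟩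
    · exact b4 h1 n h2 h3
    · exact b5 h1 n h2
  have hchg : ¬ (Y.chg true = false ∧ Y.chg false = false) := fun hh => b1 hh.1 hh.2
  obtain ⟨hi1, hi2⟩ := h.inspect ht hchg
  have h3 := h.judge ht hchg ⟨fun hh => b2 hh.1 hh.2, fun hh => b3 hh.1 hh.2, hviol 0⟩
  obtain ⟨s1, s2⟩ := sweep_pass h.home (fun n => hviol (n + 1)) h3
  simp only [h.flip] at s1 s2
  have h3ω : (3 : Ordinal.{0}) + ω = ω := by
    simpa using natCast_add_omega0 3
  rw [add_assoc, h3ω] at s1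
  refine ⟨s1, fun i hi => ?_⟩
  obtain ⟨i, rfl⟩ := lt_omega0.1 hi
  rcases lt_or_ge i 3 with hi3 | hi3
  · interval_cases i
    · simp [ht]
      tauto
    · rw [Nat.cast_one, hi1]
      exact ⟨by simp, fun n s _ hs => Or.inl hs⟩
    · rw [Nat.cast_two, hi2]
      exact ⟨by simp, fun n s _ hs => Or.inl hs⟩
  · obtain ⟨i, rfl⟩ := Nat.exists_eq_add_of_le hi3
    rw [Nat.cast_add, ← add_assoc]
    exact s2 i (natCast_lt_omega0 i)

/-- An accepting stage. -/
theorem Rep.acc (h : Rep w Y C) (ht : decProg.run c₀ t = ⟨.lim, 0, C⟩) (hacc : Y.Acc w) :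
    (decProg.run c₀ (t + (ω + 1))).state = .halt ∧
      (∀ n, (decProg.run c₀ (t + (ω + 1))).cell n .home = decide (n = 0)) ∧
      ∀ i < ω + 1, (decProg.run c₀ (t + i)).state ≠ .halt := by
  obtain ⟨s1, s2⟩ := h.sweep ht hacc.1
  have key : decProg.run c₀ (t + (ω + 1)) =
      ⟨.halt, 1, sweptCell C (Y.flip 1) (decide (∃ n, Y.flip n = true))⟩ := by
    rw [← add_assoc, Prog.run_add_one, s1, Prog.step_eq (q' := .halt) (d := true)
      (c' := sweptCell C (Y.flip 1) (decide (∃ n, Y.flip n = true)) 0), Function.update_eq_self]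
    · simp
    · have : sweptCell C (Y.flip 1) (decide (∃ n, Y.flip n = true)) 0 .fin = true := by
        simp [sweptCell, Cell.set_apply, Cell.nextHome, h.flip, hacc.2]
      simp only [decProg, decTr, this, if_true]
  rw [key]
  refine ⟨rfl, fun n => sweptCell_home h.home _ _, fun i hi => ?_⟩
  rcases (lt_add_one_iff.1 hi).lt_or_eq with hi | rfl
  · exact (s2 i hi).1
  · simp [s1]

theorem lt_omega_mul_three {i : Ordinal.{0}} (hi : i < ω * 3) :
    i < ω ∨ i = ω ∨ ∃ j < ω * 2, i = ω + 1 + j := by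
  rcases lt_or_ge i ω with h | h
  · exact Or.inl h
  obtain ⟨j, rfl⟩ := exists_add_of_le h
  by_cases hj0 : j = 0
  · right; left; simp [hj0]
  have hj : j < ω * 2 := by
    rw [show (3 : Ordinal.{0}) = 1 + 2 by norm_num, mul_add, mul_one] at hi
    exact (add_lt_add_iff_left _).1 hi
  obtain ⟨k, rfl⟩ := exists_add_of_le (Order.one_le_iff_ne_zero.2 hj0)
  exact Or.inr (Or.inr ⟨k, le_add_self.trans_lt hj, (add_assoc _ _ _).symm⟩)

/-- A continuing stage. -/
theorem Rep.cont (h : Rep w Y C) (ht : decProg.run c₀ t = ⟨.lim, 0, C⟩) (hcont : Y.Cont w) :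
    ∃ C', decProg.run c₀ (t + ω * 3) = ⟨.lim, 0, C'⟩ ∧ Rep w (Y.next w) C' ∧
      ∀ i < ω * 3, (decProg.run c₀ (t + i)).state ≠ .halt ∧
        ∀ n s, ¬ s.scratch → (decProg.run c₀ (t + i)).cell n s = true →
          C n s = true ∨ C' n s = true := by
  obtain ⟨s1, s2⟩ := h.sweep ht hcont.1
  set S := sweptCell C (Y.flip 1) (decide (∃ n, Y.flip n = true)) with hS
  set S' : ℕ → Cell := Function.update S 0 ((S 0).set (.upd true) true) with hS'
  have hSS : ∀ n s, (n = 0 → s ≠ .upd true) → S' n s = S n s := by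
    intro n s h
    by_cases hn : n = 0
    · subst hn; simp [hS', Cell.set_apply, h]
    · simp [hS', hn]
  have hSu : S' 0 (.upd true) = true := by simp [hS', Cell.set_apply]
  have hSnext : ∀ n s, n ≠ 0 ∨ (∀ m, s ≠ .upd m) ∧ (∀ m, s ≠ .chg m) ∧ s ≠ .fin →
      S n s = (C n).next (Y.flip 1) s := by
    intro n s hs
    by_cases hn : n = 0
    · subst hn
      simp only [ne_eq, not_true, false_or] at hs
      simp only [hS, sweptCell, if_true, Cell.set_apply, hs.2.1, if_false]
      cases s <;> simp_all [Cell.nextHome]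
    · simp [hS, sweptCell, hn]
  have hup : ∀ m, S 0 (.upd m) = false := by
    simp [hS, sweptCell, Cell.set_apply, Cell.nextHome]
  have hfin : S 0 .fin = false := by
    simp [hS, sweptCell, Cell.set_apply, Cell.nextHome, h.flip, hcont.2]
  have ht' : decProg.run c₀ (t + ω + 1) =
      ⟨.fetch true true, 1, passTape true S' zeroR (single 0) zeroR⟩ := by
    rw [Prog.run_add_one, s1, Prog.step_eq (q' := .fetch true true)
      (c' := ((S 0).set (.upd true) true).set (.ptr true) true) (d := true)
      (by simp [decProg, decTr, hfin, hup])]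
    simp only [if_true, zero_add, Conf.mk.injEq, true_and]
    funext n s
    rw [passTape_apply]
    have hv := hSnext n (.val true) (Or.inr (by simp))
    have hm := hSnext n (.mark true) (Or.inr (by simp))
    have hp := hSnext n (.ptr true) (Or.inr (by simp))
    simp only [Cell.next] at hv hm hp
    by_cases hn : n = 0
    · subst hn
      split_ifs with hs hs' hs''
      · subst hs; simp [Cell.set_apply, hv, zeroR]
      · subst hs'; simp [Cell.set_apply, single]
      · subst hs''; simp [Cell.set_apply, hm, zeroR]
      · simp [Cell.set_apply, hs', hS']
    · split_ifs with hs hs' hs''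
      · subst hs; simp [hn, hv, zeroR]
      · subst hs'; simp [hn, hp, single]
      · subst hs''; simp [hn, hm, zeroR]
      · simp [hn, hS']
  have hS'next : ∀ n s, (∀ m, s ≠ .upd m) → (∀ m, s ≠ .chg m) → s ≠ .fin →
      S' n s = (C n).next (Y.flip 1) s := fun n s h1 h2 h3 => by
    rw [hSS _ _ (by simp [h1]), hSnext _ _ (Or.inr ⟨h1, h2, h3⟩)]
  obtain ⟨C', g1, g2, g3, g4, g5⟩ := both_passes (w := w)
    (fun n i => by simp [hS'next, Cell.next, h.inp])
    (fun n => by simp [hS'next, Cell.next, h.home])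
    (by rw [hSS _ _ (by simp), hfin]) hSu (by rw [hSS _ _ (by simp), hup])
    (fun n => by simp [hS'next, Cell.next]) (fun n => by simp [hS'next, Cell.next])
    (fun n => by simp [hS'next, Cell.next]) ht'
  have htime : t + ω + 1 + ω * 2 = t + ω * 3 := by
    rw [omega0_mul_two, show (3 : Ordinal.{0}) = 1 + 1 + 1 by norm_num, mul_add, mul_add, mul_one]
    simp only [add_assoc]
    rw [← add_assoc 1 ω ω, one_add_omega0]
  have hsub : ∀ n s, ¬ s.scratch → S n s = true → C' n s = true := by
    intro n s hs hS1
    by_cases hv : ∃ m, s = .val m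
    · obtain ⟨m, rfl⟩ := hv
      rw [hSnext _ _ (Or.inr (by simp))] at hS1
      simp [Cell.next] at hS1
    · push Not at hv
      by_cases hu : n = 0 ∧ ∃ m, s = .upd m
      · obtain ⟨rfl, m, rfl⟩ := hu
        rw [hup] at hS1
        simp at hS1
      · rw [g2 n s hs hv fun h1 h2 => hu ⟨h1, _, h2⟩, hSS _ _ fun h1 h2 => hu ⟨h1, _, h2⟩, hS1]
  have hscr : ∀ s : Trk, (∀ m, s ≠ .mark m) → (∀ m, s ≠ .ptr m) → ¬ s.scratch := by
    rintro s h1 h2 (⟨m, hm⟩ | ⟨m, hm⟩)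
    · exact h1 m hm
    · exact h2 m hm
  have hC' : ∀ n s, (∀ m, s ≠ .mark m) → (∀ m, s ≠ .ptr m) → (∀ m, s ≠ .val m) →
      (∀ m, s ≠ .upd m) → C' n s = S n s := fun n s h1 h2 h3 h4 => by
    rw [g2 n s (hscr s h1 h2) h3 (by simp [h4]), hSS _ _ (by simp [h4])]
  have hcur : ∀ m n, S' n (.cur m) = (Y.next w).d m n := by
    intro m n
    cases m <;> simp [hS'next, Cell.next, Sup.next, h.cur, h.val]
  refine ⟨C', htime ▸ g1, ?_, fun i hi => ?_⟩
  · constructor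
    · intro n i
      rw [hC' _ _ (by simp) (by simp) (by simp) (by simp), hSnext _ _ (Or.inr (by simp))]
      simp [Cell.next, h.inp]
    · intro n
      rw [hC' _ _ (by simp) (by simp) (by simp) (by simp), hSnext _ _ (Or.inr (by simp))]
      simp [Cell.next, h.home]
    · intro m n
      rw [← hcur, g2 _ _ (hscr _ (by simp) (by simp)) (by simp) (by simp)]
    · intro m n
      rw [g4]
      simp only [hcur]
      rfl
    · intro n
      rw [hC' _ _ (by simp) (by simp) (by simp) (by simp), hSnext _ _ (Or.inr (by simp))]
      simp [Cell.next, h.cur, h.ref, Sup.next]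
    · intro m
      cases m
      · exact g3
      · rw [g2 _ _ (hscr _ (by simp) (by simp)) (by simp) (by simp), hSu]
    · intro m
      rw [hC' _ _ (by simp) (by simp) (by simp) (by simp)]
      cases m <;> simp [hS, sweptCell, Cell.set_apply, Cell.nextHome, Sup.next, h.chg]
    · rw [hC' _ _ (by simp) (by simp) (by simp) (by simp), hfin]
  · rcases lt_omega_mul_three hi with hi | rfl | ⟨j, hj, rfl⟩
    · exact ⟨(s2 i hi).1, fun n s hs h' => ((s2 i hi).2 n s hs h').imp_right (hsub n s hs)⟩
    · rw [s1]
      exact ⟨by simp, fun n s hs h' => Or.inr (hsub n s hs h')⟩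
    · rw [← add_assoc, ← add_assoc]
      exact ⟨(g5 j hj).1, fun n s hs h' => Or.inr ((g5 j hj).2 n s hs h')⟩

end Stage

end ITTM

namespace ITTM

/-! ### The decision procedure -/

/-- The program reaches the stage `b` after continuing at all earlier stages. -/
theorem run_stage (w : R) (b : Ordinal.{0}) (hb : ∀ c < b, (Sup.stage w c).Cont w) :
    ∃ C : ℕ → Cell, decProg.run (decInit w) (ω * 2 + ω * 3 * b) = ⟨.lim, 0, C⟩ ∧
      Rep w (Sup.stage w b) C ∧
      ∀ i < ω * 2 + ω * 3 * b, (decProg.run (decInit w) i).state ≠ .halt := by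
  have hω : (0 : Ordinal.{0}) < ω * 3 := by simp [pos_iff_ne_zero]
  induction b using ord_induction with
  | h0 =>
    set S : ℕ → Cell := Function.update (decInit w) 0 (((((decInit w 0).set .home true).set
      (.chg true) true).set (.chg false) true).set (.upd true) true) with hS
    have h1 : decProg.run (decInit w) 1 =
        ⟨.fetch true true, 1, passTape true S zeroR (single 0) zeroR⟩ := by
      rw [← zero_add (1 : Ordinal.{0}), Prog.run_add_one, Prog.run_zero]
      rw [show decProg.start = .start from rfl, Prog.step_eq (q' := .fetch true true) (d := true)
        (c' := (((((decInit w 0).set .home true).set (.chg true) true).set (.chg false) true).set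
          (.upd true) true).set (.ptr true) true) rfl]
      simp only [if_true, zero_add, Conf.mk.injEq, true_and]
      funext n s
      rw [passTape_apply]
      by_cases hn : n = 0
      · subst hn
        split_ifs with hs hs' hs''
        · subst hs; simp [Cell.set_apply, decInit, zeroR]
        · subst hs'; simp [Cell.set_apply, single]
        · subst hs''; simp [Cell.set_apply, decInit, zeroR]
        · simp [Cell.set_apply, hs', hS]
      · split_ifs with hs hs' hs''
        · subst hs; simp [hn, decInit, zeroR]
        · subst hs'; simp [hn, decInit, single]
        · subst hs''; simp [hn, decInit, zeroR]
        · simp [hn, hS]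
    have hSapp : ∀ n s, S n s = if n = 0 ∧ (s = .home ∨ s = .chg true ∨ s = .chg false ∨
        s = .upd true) then true else decInit w n s := by
      intro n s
      by_cases hn : n = 0
      · subst hn
        simp only [hS, Function.update_self, Cell.set_apply, true_and]
        split_ifs <;> simp_all
      · simp [hS, hn]
    obtain ⟨C', g1, g2, g3, g4, g5⟩ := both_passes (w := w) (fun n i => by simp [hSapp, decInit])
      (fun n => by simp [hSapp, decInit]) (by simp [hSapp, decInit]) (by simp [hSapp])
      (by simp [hSapp, decInit]) (fun n => by simp [hSapp, decInit])
      (fun n => by simp [hSapp, decInit]) (fun n => by simp [hSapp, decInit]) h1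
    have htime : (1 : Ordinal.{0}) + ω * 2 = ω * 2 := by
      rw [omega0_mul_two, ← add_assoc, one_add_omega0]
    rw [htime] at g1
    rw [mul_zero, add_zero, Sup.stage_zero]
    refine ⟨C', g1, ⟨fun n i => ?_, fun n => ?_, fun m n => ?_, fun m n => ?_, fun n => ?_,
      fun m => ?_, fun m => ?_, ?_⟩, fun i hi => ?_⟩
    · rw [g2 _ _ (by simp [Trk.scratch]) (by simp) (by simp)]; simp [hSapp, decInit]
    · rw [g2 _ _ (by simp [Trk.scratch]) (by simp) (by simp)]; simp [hSapp, decInit]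
    · rw [g2 _ _ (by simp [Trk.scratch]) (by simp) (by simp)]
      simp [hSapp, decInit, Sup.init, zeroR]
    · rw [g4]
      simp only [Sup.init]
      congr 1
      funext n
      simp [hSapp, decInit, zeroR]
    · rw [g2 _ _ (by simp [Trk.scratch]) (by simp) (by simp)]
      simp [hSapp, decInit, Sup.init, zeroR]
    · cases m
      · exact g3
      · rw [g2 _ _ (by simp [Trk.scratch]) (by simp) (by simp)]; simp [hSapp]
    · rw [g2 _ _ (by simp [Trk.scratch]) (by simp) (by simp)]
      cases m <;> simp [hSapp, Sup.init]
    · rw [g2 _ _ (by simp [Trk.scratch]) (by simp) (by simp)]; simp [hSapp, decInit]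
    · by_cases hi0 : i = 0
      · subst hi0; rw [Prog.run_zero]; simp [decProg]
      · obtain ⟨k, rfl⟩ := exists_add_of_le (Order.one_le_iff_ne_zero.2 hi0)
        exact (g5 k (le_add_self.trans_lt hi)).1
  | h1 b ih =>
    obtain ⟨C, h1, h2, h3⟩ := ih fun c hc => hb c (hc.trans (lt_add_one b))
    obtain ⟨C', g1, g2, g3⟩ := h2.cont h1 (hb b (lt_add_one b))
    rw [mul_add, mul_one, ← add_assoc, Sup.stage_add_one]
    refine ⟨C', g1, g2, fun i hi => ?_⟩
    rcases lt_or_ge i (ω * 2 + ω * 3 * b) with hi' | hi'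
    · exact h3 i hi'
    · obtain ⟨j, rfl⟩ := exists_add_of_le hi'
      exact (g3 j ((add_lt_add_iff_left _).1 hi)).1
  | h2 b hlim ih =>
    have ih' := fun c (hc : c < b) => ih c hc fun c' hc' => hb c' (hc'.trans hc)
    have hlim' : IsSuccLimit (ω * 2 + ω * 3 * b) :=
      isSuccLimit_add _ (isSuccLimit_mul_right hω hlim)
    have hb0 : 0 < b := hlim.bot_lt
    have hcell : ∀ n s, ¬ s.scratch → lsup (fun a => (decProg.run (decInit w) a).cell n s)
        (ω * 2 + ω * 3 * b) =
        lsup (fun c => (decProg.run (decInit w) (ω * 2 + ω * 3 * c)).cell n s) b := by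
      intro n s hs
      rw [lsup_add (mul_pos hω hb0), lsup_mul hω hlim]
      intro c hc i hi h
      obtain ⟨C, h1, h2, -⟩ := ih' c hc
      obtain ⟨C', g1, -, g3⟩ := h2.cont h1 (hb c hc)
      rw [mul_add, mul_one, ← add_assoc, h1, g1]
      rw [← add_assoc] at h
      exact (g3 i hi).2 n s hs h
    have hval : ∀ n s (f : Ordinal.{0} → Bool), ¬ s.scratch →
        (∀ c < b, ∀ C, Rep w (Sup.stage w c) C → C n s = f c) →
        lsup (fun a => (decProg.run (decInit w) a).cell n s) (ω * 2 + ω * 3 * b) = lsup f b := by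
      intro n s f hs h
      rw [hcell n s hs]
      refine lsup_congr fun c hc => ?_
      obtain ⟨C, h1, h2, -⟩ := ih' c hc
      rw [h1]
      exact h c hc C h2
    have hconst : ∀ v : Bool, lsup (fun _ => v) b = v := fun v =>
      lsup_of_eventually hb0 fun _ _ _ => rfl
    refine ⟨_, Prog.run_limit _ _ hlim', ?_, fun i hi => ?_⟩
    · rw [Sup.stage_limit w hlim]
      refine ⟨fun n i => ?_, fun n => ?_, fun m n => ?_, fun m n => ?_, fun n => ?_,
        fun m => ?_, fun m => ?_, ?_⟩
      · rw [hval _ _ (fun _ => w (16 * n + i.val)) (by simp [Trk.scratch])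
          fun c _ C hC => hC.inp _ _, hconst]
      · rw [hval _ _ (fun _ => decide (n = 0)) (by simp [Trk.scratch])
          fun c _ C hC => hC.home _, hconst]
      · exact hval _ _ _ (by simp [Trk.scratch]) fun c _ C hC => hC.cur _ _
      · exact hval _ _ _ (by simp [Trk.scratch]) fun c _ C hC => hC.val _ _
      · exact hval _ _ _ (by simp [Trk.scratch]) fun c _ C hC => hC.ref _
      · rw [hval _ _ (fun _ => true) (by simp [Trk.scratch]) fun c _ C hC => hC.upd _, hconst]
      · exact hval _ _ _ (by simp [Trk.scratch]) fun c _ C hC => hC.chg _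
      · rw [hval _ _ (fun _ => false) (by simp [Trk.scratch]) fun c _ C hC => hC.fin, hconst]
    · rcases lt_or_ge i (ω * 2) with hi' | hi'
      · obtain ⟨C, -, -, h3⟩ := ih' 0 hb0
        exact h3 i (by simpa using hi')
      · obtain ⟨j, rfl⟩ := exists_add_of_le hi'
        have hj := (add_lt_add_iff_left _).1 hi
        have hq : j / (ω * 3) + 1 < b := by
          have := (Ordinal.lt_mul_iff_div_lt hω.ne').1 hj
          exact hlim.add_one_lt this
        obtain ⟨C, -, -, h3⟩ := ih' _ hq
        refine h3 _ ?_
        rw [add_lt_add_iff_left]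
        simpa using Ordinal.lt_mul_succ_div j hω.ne'

namespace Sup
variable (w : R)

theorem stage_d_mono {a b : Ordinal.{0}} (hab : a ≤ b) {n : ℕ}
    (h : (stage w a).d false n = true) : (stage w b).d false n = true := by
  induction b using ord_induction with
  | h0 => obtain rfl : a = 0 := by simpa using hab
          exact h
  | h1 b ih =>
    rcases hab.lt_or_eq with hab | rfl
    · rw [stage_add_one]
      simp [next, ih (lt_add_one_iff.1 hab)]
    · exact h
  | h2 b hb ih =>
    rcases hab.lt_or_eq with hab | rfl
    · rw [stage_limit w hb]
      exact lsup_of_eventually hab fun c h1 h2 => ih c h2 h1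
    · exact h

theorem stage_d_of_flip {a b : Ordinal.{0}} (hab : a < b) {n : ℕ}
    (h : (stage w a).flip n = true) : (stage w b).d false n = true := by
  refine stage_d_mono w (Order.add_one_le_iff.2 hab) ?_
  rw [stage_add_one]
  simp only [flip, Bool.and_eq_true, Bool.not_eq_true'] at h
  simp [next, h.2]

theorem flip_unique {a b : Ordinal.{0}} {n : ℕ} (ha : (stage w a).flip n = true)
    (hb : (stage w b).flip n = true) : a = b := by
  have key : ∀ a b, a < b → (stage w a).flip n = true → (stage w b).flip n = true → False := by
    intro a b hab ha hb
    have := stage_d_of_flip w hab ha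
    simp [flip, this] at hb
  rcases lt_trichotomy a b with h | h | h
  · exact (key a b h ha hb).elim
  · exact h
  · exact (key b a h hb ha).elim

/-- The procedure stops at some stage. -/
theorem exists_not_cont : ∃ b, ¬ (stage w b).Cont w := by
  by_contra! h
  have hflip : ∀ a : Ordinal.{0}, ∃ n, (stage w (ω * a)).flip n = true ∨
      (stage w (ω * a + 1)).flip n = true := by
    intro a
    by_contra! hne
    refine (h (ω * a + 1 + 1)).1 (Or.inl ⟨?_, ?_⟩)
    · rw [stage_add_one]
      simp [next, (hne _).2]
    · rw [stage_add_one, next, stage_add_one]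
      simp [next, (hne _).1]
  choose f hf using hflip
  refine not_injective_of_ordinal f fun a b hab => ?_
  have key : ∀ a b, a < b → f a = f b → False := by
    intro a b hlt hab
    have hlt' : ω * a + 1 < ω * b := by
      calc ω * a + 1 < ω * a + ω := by gcongr; exact one_lt_omega0
        _ = ω * (a + 1) := by rw [mul_add, mul_one]
        _ ≤ ω * b := by gcongr; exact Order.add_one_le_iff.2 hlt
    rcases hf a with h1 | h1 <;> rcases hf b with h2 | h2 <;> rw [← hab] at h2 <;>
      have := flip_unique w h1 h2
    · exact (((lt_add_one _).trans hlt').ne this)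
    · exact (((lt_add_one _).trans (hlt'.trans (lt_add_one _))).ne this)
    · exact hlt'.ne this
    · exact (hlt'.trans (lt_add_one _)).ne this
  rcases lt_trichotomy a b with h | h | h
  · exact (key a b h hab).elim
  · exact h
  · exact (key b a h hab.symm).elim

end Sup

/-- The set of reals accepted by the decision procedure. -/
def accepted : Set R :=
  {w | ∃ b, (Sup.stage w b).Acc w ∧ ∀ c < b, (Sup.stage w c).Cont w}

theorem encTape_home (c : ℕ → Cell) (n : ℕ) :
    encTape Trk.pos c n 2 = (decide (n % 16 = 0) && c (n / 16) .home) := by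
  by_cases hn : n % 16 = 0
  · have : Fin.ofNat 16 n = 0 := by ext; simpa [Fin.ofNat] using hn
    simp only [encTape, this, hn, decide_true, Bool.true_and]
    exact encCell_pos _ Trk.pos_injective _ .home
  · simp only [hn, decide_false, Bool.false_and]
    simp only [encTape, encCell, decide_eq_false_iff_not]
    rintro ⟨t, ht, -⟩
    cases t <;> simp [Trk.pos, eq_comm] at ht
    omega

theorem decidable_accepted : ITTMDecidable accepted := by
  obtain ⟨M, hM⟩ := exists_machine_of_prog Trk.pos Trk.pos_injective decProg decInit
    encTape_decInit
  refine ⟨M, fun w => ?_⟩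
  obtain ⟨b, hb, hmin⟩ : ∃ b, ¬ (Sup.stage w b).Cont w ∧ ∀ c < b, (Sup.stage w c).Cont w := by
    obtain ⟨b, hb, hmin⟩ := WellFounded.has_min wellFounded_lt
      {b | ¬ (Sup.stage w b).Cont w} (Sup.exists_not_cont w)
    exact ⟨b, hb, fun c hc => by_contra fun h => hmin c h hc⟩
  obtain ⟨C, h1, h2, h3⟩ := run_stage w b hmin
  have hlt : ∀ j, (∀ i < j, (decProg.run (decInit w) (ω * 2 + ω * 3 * b + i)).state ≠ .halt) →
      ∀ i < ω * 2 + ω * 3 * b + j, (decProg.run (decInit w) i).state ≠ .halt := by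
    intro j hj i hi
    rcases lt_or_ge i (ω * 2 + ω * 3 * b) with hi' | hi'
    · exact h3 i hi'
    · obtain ⟨k, rfl⟩ := exists_add_of_le hi'
      exact hj k ((add_lt_add_iff_left _).1 hi)
  by_cases hbad : (Sup.stage w b).Bad w
  · have hnot : w ∉ accepted := by
      rintro ⟨c, hc, hc'⟩
      rcases lt_trichotomy b c with h | rfl | h
      · exact hb (hc' b h)
      · exact hc.1 hbad
      · have := (hmin c h).2
        rw [hc.2] at this
        simp at this
    refine ⟨fun h => absurd h hnot, fun _ => ?_⟩
    obtain ⟨k, g1, g2, g3⟩ := h2.rej h1 hbad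
    have := hM w _ (hlt k fun i hi => by
      obtain ⟨i, rfl⟩ := lt_omega0.1 (hi.trans (natCast_lt_omega0 k))
      exact g3 i (by exact_mod_cast hi)) g1
    convert this using 1
    funext n
    rw [encTape_home, g2]
    simp [zeroR]
  · have hacc : (Sup.stage w b).Acc w :=
      ⟨hbad, by by_contra h; exact hb ⟨hbad, by simpa using h⟩⟩
    refine ⟨fun _ => ?_, fun h => absurd ⟨b, hacc, hmin⟩ h⟩
    obtain ⟨g1, g2, g3⟩ := h2.acc h1 hacc
    have := hM w _ (hlt _ g3) g1
    convert this using 1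
    funext n
    rw [encTape_home, g2, oneR, Bool.eq_iff_iff]
    simp only [decide_eq_true_eq, Bool.and_eq_true]
    omega

end ITTM

namespace ITTM

/-! ### Instruction streams for continuous operators -/

/-- A condition on one bit of the operand, or on one bit of the input. -/
abbrev Lit := (ℕ × Bool) ⊕ (ℕ × Fin 8 × Bool)

/-- The condition expressed by a literal. -/
def Lit.Sat (d u : R) : Lit → Prop
  | .inl (n, b) => d n = b
  | .inr (n, r, b) => block u n r = b

/-- The instructions evaluating a literal. -/
def Lit.word : Lit → List Instr
  | .inl (n, b) => .reset :: (List.replicate n .inc ++ [.litD b])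
  | .inr (n, r, b) => .reset :: (List.replicate n .inc ++ [.litI r b])

/-- The instructions evaluating a conjunction of literals and storing the result at `n`. -/
def clauseWord (c : List Lit × ℕ) : List Instr :=
  c.1.flatMap Lit.word ++ .reset :: (List.replicate c.2 .inc ++ [.store])

section Exec
variable (d u : R)

/-- Execution of a list of instructions. -/
def execList (l : List Instr) (s : Eng) : Eng := l.foldl (fun s i => i.exec d (block u) s) s

theorem execList_append (l l' : List Instr) (s : Eng) :
    execList d u (l ++ l') s = execList d u l' (execList d u l s) := List.foldl_append

theorem execList_inc (n : ℕ) (s : Eng) :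
    execList d u (List.replicate n .inc) s = ⟨s.p + n, s.f, s.v⟩ := by
  induction n generalizing s with
  | zero => rfl
  | succ n ih =>
    rw [List.replicate_succ]
    change execList d u _ (Instr.inc.exec d (block u) s) = _
    rw [ih]
    simp only [Instr.exec, Instr.flag, Eng.mk.injEq, and_true]
    omega

theorem execList_seek (n : ℕ) (i : Instr) (s : Eng) :
    execList d u (.reset :: (List.replicate n .inc ++ [i])) s = i.exec d (block u) ⟨n, s.f, s.v⟩ := by
  change execList d u _ (Instr.reset.exec d (block u) s) = _
  rw [execList_append, execList_inc]
  simp [Instr.exec, execList, Instr.flag]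

theorem execList_lits (l : List Lit) (s : Eng) :
    (execList d u (l.flatMap Lit.word) s).v = s.v ∧
    ((execList d u (l.flatMap Lit.word) s).f = true ↔ s.f = true ∧ ∀ a ∈ l, a.Sat d u) := by
  induction l generalizing s with
  | nil => simp [execList]
  | cons a l ih =>
    rw [List.flatMap_cons, execList_append]
    have h := ih (execList d u a.word s)
    have ha : (execList d u a.word s).v = s.v ∧
        ((execList d u a.word s).f = true ↔ s.f = true ∧ a.Sat d u) := by
      rcases a with ⟨n, b⟩ | ⟨n, r, b⟩ <;>
        simp [Lit.word, execList_seek, Instr.exec, Instr.flag, Lit.Sat]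
    rw [h.1, h.2, ha.1, ha.2]
    simp [and_assoc]

theorem execList_clauseWord (c : List Lit × ℕ) (s : Eng) (hs : s.f = true) :
    (execList d u (clauseWord c) s).f = true ∧
    ∀ n, (execList d u (clauseWord c) s).v n = true ↔
      s.v n = true ∨ c.2 = n ∧ ∀ a ∈ c.1, a.Sat d u := by
  obtain ⟨h1, h2⟩ := execList_lits d u c.1 s
  rw [clauseWord, execList_append, execList_seek]
  refine ⟨rfl, fun n => ?_⟩
  simp only [Instr.exec, h1]
  by_cases hn : n = c.2
  · subst hn; simp [h2, hs]
  · simp [hn, Ne.symm hn]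

theorem eng_eq_execList (k : ℕ) : eng u d k =
    execList d u ((List.range k).map fun j => decI (block u (j + 1))) (eng u d 0) := by
  induction k with
  | zero => rfl
  | succ k ih => rw [List.range_succ, List.map_append, execList_append, ← ih]; rfl

end Exec

/-- An infinite concatenation of nonempty lists. -/
theorem exists_concat {α : Type} (W : ℕ → List α) (hW : ∀ i, W i ≠ []) :
    ∃ s : ℕ → α, ∀ i, (List.range ((List.range i).flatMap W).length).map s =
      (List.range i).flatMap W := by
  have hlen : ∀ i, i ≤ ((List.range i).flatMap W).length := by
    intro i
    induction i with
    | zero => simp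
    | succ i ih =>
      have := List.length_pos_of_ne_nil (hW i)
      rw [List.range_succ, List.flatMap_append, List.length_append]
      simp only [List.flatMap_singleton]
      omega
  have hpre : ∀ i j, i ≤ j → (List.range i).flatMap W <+: (List.range j).flatMap W := by
    intro i j hij
    induction hij with
    | refl => exact List.prefix_rfl
    | step _ ih =>
      refine ih.trans ?_
      rw [List.range_succ, List.flatMap_append]
      exact List.prefix_append _ _
  refine ⟨fun k => ((List.range (k + 1)).flatMap W)[k]'(hlen (k + 1)), fun i => ?_⟩
  refine List.ext_getElem (by simp) fun k h1 h2 => ?_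
  simp only [List.getElem_map, List.getElem_range]
  rcases le_total i (k + 1) with h | h
  · exact ((hpre _ _ h).getElem h2).symm
  · exact (hpre _ _ h).getElem _

/-- Every set of clauses is evaluated by some instruction stream. -/
theorem exists_stream_of_clauses (S : Set (List Lit × ℕ)) (x : Bool) :
    ∃ u : R, u 0 = x ∧ ∀ d n, oper u d n = true ↔ ∃ c ∈ S, c.2 = n ∧ ∀ a ∈ c.1, a.Sat d u := by
  let W : ℕ → List Instr := fun i => match (Encodable.decode i : Option (List Lit × ℕ)) with
    | some c => if c ∈ S then clauseWord c else [.reset]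
    | none => [.reset]
  have hW : ∀ i, (∃ c ∈ S, Encodable.decode i = some c ∧ W i = clauseWord c) ∨
      (¬ ∃ c ∈ S, Encodable.decode i = some c) ∧ W i = [.reset] := by
    intro i
    simp only [W]
    cases h : (Encodable.decode i : Option (List Lit × ℕ)) with
    | none => simp
    | some c =>
      by_cases hc : c ∈ S
      · exact Or.inl ⟨c, hc, rfl, if_pos hc⟩
      · exact Or.inr ⟨by rintro ⟨c', hc', h⟩; cases h; exact hc hc', if_neg hc⟩
  obtain ⟨s, hs⟩ := exists_concat W fun i => by
    rcases hW i with ⟨c, -, -, h⟩ | ⟨-, h⟩ <;> simp [h, clauseWord]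
  choose g hg using fun n => decI_surjective (s n)
  let u : R := fun m => if m < 8 then x else g (m / 8 - 1) (Fin.ofNat 8 m)
  have hu : ∀ k, decI (block u (k + 1)) = s k := by
    intro k
    rw [← hg k]
    congr 1
    funext r
    have := r.isLt
    have h1 : ¬ (8 * (k + 1) + r.val < 8) := by omega
    have h2 : (8 * (k + 1) + r.val) / 8 - 1 = k := by omega
    have h3 : Fin.ofNat 8 (8 * (k + 1) + r.val) = r := by
      ext; simp only [Fin.ofNat]; omega
    simp only [block, u, if_neg h1, h2, h3]
  refine ⟨u, by simp [u], fun d n => ?_⟩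
  set N : ℕ → ℕ := fun i => ((List.range i).flatMap W).length with hN
  have heng : ∀ i, eng u d (N i) = execList d u ((List.range i).flatMap W) (eng u d 0) := by
    intro i
    rw [eng_eq_execList]
    simp only [hu]
    rw [hs i]
  have key : ∀ i, (eng u d (N i)).f = true ∧ ((eng u d (N i)).v n = true ↔
      ∃ j < i, ∃ c ∈ S, Encodable.decode j = some c ∧ c.2 = n ∧ ∀ a ∈ c.1, a.Sat d u) := by
    intro i
    induction i with
    | zero => simp [hN, eng]
    | succ i ih =>
      have hstep : eng u d (N (i + 1)) = execList d u (W i) (eng u d (N i)) := by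
        rw [heng, heng, List.range_succ, List.flatMap_append, execList_append,
          List.flatMap_singleton]
      rw [hstep]
      rcases hW i with ⟨c, hc, hdec, h⟩ | ⟨hno, h⟩
      · rw [h]
        refine ⟨(execList_clauseWord d u c _ ih.1).1, ?_⟩
        rw [(execList_clauseWord d u c _ ih.1).2, ih.2]
        constructor
        · rintro (⟨j, hj, h⟩ | h)
          · exact ⟨j, by omega, h⟩
          · exact ⟨i, by omega, c, hc, hdec, h⟩
        · rintro ⟨j, hj, c', hc', hdec', h⟩
          rcases Nat.lt_succ_iff_lt_or_eq.1 hj with hj | rfl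
          · exact Or.inl ⟨j, hj, c', hc', hdec', h⟩
          · rw [hdec] at hdec'
            cases hdec'
            exact Or.inr h
      · rw [h]
        refine ⟨by simpa [execList, Instr.exec, Instr.flag] using ih.1, ?_⟩
        have : (execList d u [.reset] (eng u d (N i))).v = (eng u d (N i)).v := rfl
        rw [this, ih.2]
        constructor
        · rintro ⟨j, hj, h⟩
          exact ⟨j, by omega, h⟩
        · rintro ⟨j, hj, c', hc', hdec', h⟩
          rcases Nat.lt_succ_iff_lt_or_eq.1 hj with hj | rfl
          · exact ⟨j, hj, c', hc', hdec', h⟩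
          · exact absurd ⟨c', hc', hdec'⟩ hno
  have hNle : ∀ i, i ≤ N i := by
    intro i
    induction i with
    | zero => simp
    | succ i ih =>
      have : W i ≠ [] := by
        rcases hW i with ⟨c, -, -, h⟩ | ⟨-, h⟩ <;> simp [h, clauseWord]
      have := List.length_pos_of_ne_nil this
      simp only [hN, List.range_succ, List.flatMap_append, List.length_append,
        List.flatMap_singleton] at ih ⊢
      omega
  rw [oper_eq_true]
  constructor
  · rintro ⟨k, hk⟩
    obtain ⟨j, -, c, hc, -, h⟩ := (key k).2.1 (eng_v_mono u d (hNle k) n hk)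
    exact ⟨c, hc, h⟩
  · rintro ⟨c, hc, h⟩
    exact ⟨_, (key (Encodable.encode c + 1)).2.2
      ⟨Encodable.encode c, by omega, c, hc, Encodable.encodek c, h⟩⟩

/-- Every operator with open graph of values is given by an instruction stream. The operator may
depend on the stream itself. -/
theorem exists_stream (G : R → R → R) (hG : ∀ d u n, G d u n = true →
    ∃ N, ∀ d' u', (∀ k < N, d' k = d k) → (∀ k < N, u' k = u k) → G d' u' n = true) (x : Bool) :
    ∃ u : R, u 0 = x ∧ ∀ d, oper u d = G d u := by
  obtain ⟨u, hu, h⟩ := exists_stream_of_clauses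
    {c | ∀ d u, (∀ a ∈ c.1, a.Sat d u) → G d u c.2 = true} x
  refine ⟨u, hu, fun d => ?_⟩
  funext n
  rw [Bool.eq_iff_iff, h]
  constructor
  · rintro ⟨c, hc, rfl, hsat⟩
    exact hc d u hsat
  · intro hn
    obtain ⟨N, hN⟩ := hG d u n hn
    refine ⟨((List.range N).map (fun k => .inl (k, d k)) ++
      (List.range N).flatMap (fun k => (List.finRange 8).map fun r => .inr (k, r, block u k r)), n),
      fun d' u' hsat => hN d' u' (fun k hk => ?_) fun k hk => ?_, rfl, fun a ha => ?_⟩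
    · exact hsat (.inl (k, d k)) (List.mem_append_left _
        (List.mem_map.2 ⟨k, List.mem_range.2 hk, rfl⟩))
    · have := hsat (.inr (k / 8, Fin.ofNat 8 k, block u (k / 8) (Fin.ofNat 8 k)))
        (List.mem_append_right _ (List.mem_flatMap.2 ⟨k / 8, List.mem_range.2 (by omega),
          List.mem_map.2 ⟨_, List.mem_finRange _, rfl⟩⟩))
      simpa [Lit.Sat, block, Fin.ofNat, Nat.div_add_mod] using this
    · rcases List.mem_append.1 ha with ha | ha
      · obtain ⟨k, -, rfl⟩ := List.mem_map.1 ha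
        rfl
      · obtain ⟨k, -, ha⟩ := List.mem_flatMap.1 ha
        obtain ⟨r, -, rfl⟩ := List.mem_map.1 ha
        rfl

end ITTM

namespace ITTM

/-! ### Transfinite iteration of an operator -/

/-- The transfinite iteration, with upper limits at limit stages, of the operator of a stream. -/
noncomputable def iter (y : R) : Ordinal.{0} → R :=
  titer zeroR (oper y) fun f a n => lsup (fun b => f b n) a

theorem iter_zero (y : R) : iter y 0 = zeroR := titer_zero

theorem iter_add_one (y : R) (a : Ordinal.{0}) : iter y (a + 1) = oper y (iter y a) :=
  titer_add_one a

theorem iter_limit (y : R) {a : Ordinal.{0}} (ha : IsSuccLimit a) :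
    iter y a = fun n => lsup (fun b => iter y b n) a := by
  refine titer_limit (fun f g a h => ?_) ha
  funext n
  exact lsup_congr fun b hb => by rw [h b hb]

theorem iter_add_congr (y : R) {a b : Ordinal.{0}} (h : iter y a = iter y b) (c : Ordinal.{0}) :
    iter y (a + c) = iter y (b + c) := by
  induction c using ord_induction with
  | h0 => simpa using h
  | h1 c ih => rw [← add_assoc, ← add_assoc, iter_add_one, iter_add_one, ih]
  | h2 c hc ih =>
    rw [iter_limit y (isSuccLimit_add _ hc), iter_limit y (isSuccLimit_add _ hc)]
    funext n
    rw [lsup_add hc.bot_lt, lsup_add hc.bot_lt]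
    exact lsup_congr fun e he => by rw [ih e he]

/-- A value that recurs, while being an upper bound of the intermediate values, recurs forever. -/
theorem iter_recur (y : R) {a c : Ordinal.{0}} (hc : 0 < c) (h : iter y (a + c) = iter y a)
    (hle : ∀ b < c, ∀ n, iter y (a + b) n = true → iter y a n = true) (e : Ordinal.{0}) :
    iter y (a + c * e) = iter y a := by
  induction e using ord_induction with
  | h0 => simp
  | h1 e ih => rw [mul_add, mul_one, ← add_assoc, iter_add_congr y ih, h]
  | h2 e he ih =>
    rw [iter_limit y (isSuccLimit_add _ (isSuccLimit_mul_right hc he))]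
    funext n
    rw [lsup_add (mul_pos hc he.bot_lt), lsup_mul hc he]
    · exact lsup_of_eventually he.bot_lt fun b _ hb => by rw [ih b hb]
    · intro b hb d hd h
      left
      rw [ih b hb]
      rw [← add_assoc, iter_add_congr y (ih b hb)] at h
      exact hle d hd n h

theorem add_one_eq_or_limit (c : Ordinal.{0}) :
    (∃ γ, 1 + c = γ + 1 ∧ (c = 0 ∨ ∃ c', c = c' + 1)) ∨ IsSuccLimit c ∧ 1 + c = c := by
  rcases zero_or_add_one_or_limit c with rfl | ⟨c', rfl⟩ | hc
  · exact Or.inl ⟨0, by simp, Or.inl rfl⟩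
  · exact Or.inl ⟨1 + c', (add_assoc _ _ _).symm, Or.inr ⟨c', rfl⟩⟩
  · exact Or.inr ⟨hc, one_add_of_omega0_le (omega0_le_of_isSuccLimit hc)⟩

namespace Sup
variable {w : R} {b : Ordinal.{0}}

theorem stage_v_of_zero_or_add_one (hb : b = 0 ∨ ∃ c, b = c + 1) (m : Bool) :
    (stage w b).v m = oper (comp w m) ((stage w b).d m) := by
  rcases hb with rfl | ⟨c, rfl⟩
  · rw [stage_zero]; rfl
  · rw [stage_add_one]; rfl

theorem stage_v_true (b : Ordinal.{0}) : (stage w b).v true = iter (leftR w) (1 + b) := by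
  induction b using ord_induction with
  | h0 =>
    rw [add_zero, ← zero_add (1 : Ordinal.{0}), iter_add_one, iter_zero, stage_zero]
    rfl
  | h1 b ih =>
    rw [stage_v_of_zero_or_add_one (Or.inr ⟨b, rfl⟩), ← add_assoc, iter_add_one, ← ih,
      stage_add_one]
    rfl
  | h2 b hb ih =>
    rw [stage_limit w hb, iter_limit _ (isSuccLimit_add _ hb)]
    funext n
    rw [lsup_add hb.bot_lt]
    exact lsup_congr fun c hc => by rw [ih c hc]

theorem stage_d_true {γ : Ordinal.{0}} (h : 1 + b = γ + 1) :
    (stage w b).d true = iter (leftR w) γ := by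
  rcases zero_or_add_one_or_limit b with rfl | ⟨c, rfl⟩ | hb
  · obtain rfl : γ = 0 := by
      have : γ + 1 = 0 + 1 := by rw [← h, add_zero, zero_add]
      simpa only [add_left_inj] using add_one_inj.1 this
    rw [stage_zero, iter_zero]
    rfl
  · rw [← add_assoc] at h
    obtain rfl : 1 + c = γ := by simpa using h
    rw [stage_add_one, ← stage_v_true]
    rfl
  · rw [one_add_of_omega0_le (omega0_le_of_isSuccLimit hb)] at h
    subst h
    simp at hb

theorem stage_d_true_limit (hb : IsSuccLimit b) : (stage w b).d true = iter (leftR w) b := by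
  induction b using WellFoundedLT.induction with
  | ind b ih =>
    rw [← one_add_of_omega0_le (omega0_le_of_isSuccLimit hb), ← stage_v_true,
      one_add_of_omega0_le (omega0_le_of_isSuccLimit hb), stage_limit w hb]
    funext n
    simp only [lim]
    rw [Bool.eq_iff_iff, lsup_eq_true, lsup_eq_true]
    constructor
    · intro h a ha
      obtain ⟨c, h1, h2, h3⟩ := h (a + 1) (hb.add_one_lt ha)
      rcases zero_or_add_one_or_limit c with rfl | ⟨c, rfl⟩ | hc
      · simp at h1
      · refine ⟨c, by simpa using h1, (lt_add_one c).trans h2, ?_⟩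
        rw [stage_v_true, ← stage_d_true (add_assoc _ _ _).symm, h3]
      · refine ⟨c, (lt_add_one a).le.trans h1, h2, ?_⟩
        rw [stage_v_true, one_add_of_omega0_le (omega0_le_of_isSuccLimit hc), ← ih c h2 hc, h3]
    · intro h a ha
      obtain ⟨c, h1, h2, h3⟩ := h a ha
      refine ⟨c + 1, h1.trans (lt_add_one c).le, hb.add_one_lt h2, ?_⟩
      rw [stage_d_true (add_assoc _ _ _).symm, ← stage_v_true, h3]

theorem stage_d_false_limit (hb : IsSuccLimit b) {n : ℕ} :
    (stage w b).d false n = true ↔ ∃ c < b, (stage w c).d false n = true := by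
  rw [stage_limit w hb]
  constructor
  · intro h
    obtain ⟨c, -, h1, h2⟩ := lsup_eq_true.1 h 0 hb.bot_lt
    exact ⟨c, h1, h2⟩
  · rintro ⟨c, h1, h2⟩
    exact lsup_of_eventually h1 fun e h3 _ => stage_d_mono w h3 h2

theorem flip_limit (hb : IsSuccLimit b) (n : ℕ) : (stage w b).flip n = false := by
  by_contra h
  simp only [flip, Bool.not_eq_false, Bool.and_eq_true, Bool.not_eq_true'] at h
  obtain ⟨h1, h2⟩ := h
  rw [stage_limit w hb] at h2
  obtain ⟨c, hc, h2⟩ := lsup_eq_false.1 h2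
  have hd : (stage w c).d false n = false := by
    by_contra hd
    have := stage_d_mono w hc.le (by simpa using hd)
    rw [h1] at this
    simp at this
  have := stage_d_of_flip w (n := n) hc (by simp [flip, hd, h2 c le_rfl hc])
  rw [h1] at this
  simp at this

theorem exists_flip_of_d {n : ℕ} (h : (stage w b).d false n = true) :
    ∃ a < b, (stage w a).flip n = true := by
  induction b using ord_induction with
  | h0 => rw [stage_zero] at h; simp [init, zeroR] at h
  | h1 b ih =>
    by_cases hd : (stage w b).d false n = true
    · obtain ⟨a, ha, h⟩ := ih hd
      exact ⟨a, ha.trans (lt_add_one b), h⟩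
    · refine ⟨b, lt_add_one b, ?_⟩
      rw [stage_add_one] at h
      simp only [next, hd, Bool.false_eq_true, if_false, Bool.or_eq_true, false_or] at h
      simpa [flip, h] using hd
  | h2 b hb ih =>
    obtain ⟨c, hc, h⟩ := (stage_d_false_limit hb).1 h
    obtain ⟨a, ha, h⟩ := ih c hc h
    exact ⟨a, ha.trans hc, h⟩

theorem stage_e {a : Ordinal.{0}} (ha : (stage w a).flip 1 = true) (hab : a < b) :
    (stage w b).e = (stage w a).d true := by
  induction b using ord_induction with
  | h0 => simp at hab
  | h1 b ih =>
    rw [stage_add_one]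
    rcases (lt_add_one_iff.1 hab).lt_or_eq with hab | rfl
    · have : (stage w b).flip 1 = false := by
        by_contra h
        exact hab.ne (flip_unique w ha (by simpa using h))
      simp [next, this, ih hab]
    · simp [next, ha]
  | h2 b hb ih =>
    rw [stage_limit w hb]
    funext n
    exact lsup_of_eventually (hb.add_one_lt hab) fun c h1 h2 => by
      rw [ih c h2 (Order.add_one_le_iff.1 h1)]

end Sup

/-- An accepted input contains a bit that differs from a recurring value of the iteration. -/
theorem exists_recur_of_accepted {w : R} (h : w ∈ accepted) :
    ∃ δ τ, 0 < τ ∧ iter (leftR w) δ 0 ≠ w 1 ∧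
      ∀ ξ, iter (leftR w) (δ + τ * ξ) = iter (leftR w) δ := by
  obtain ⟨b, ⟨hbad, hflip⟩, hcont⟩ := h
  have hnb : ∀ c ≤ b, ¬ (Sup.stage w c).Bad w := fun c hc =>
    hc.lt_or_eq.elim (fun h => (hcont c h).1) fun h => h ▸ hbad
  have hstep : ∀ a n, (Sup.stage w a).flip n = true → ∃ γ, 1 + a = γ + 1 := by
    intro a n h
    rcases add_one_eq_or_limit a with ⟨γ, hγ, -⟩ | ⟨hl, -⟩
    · exact ⟨γ, hγ⟩
    · rw [Sup.flip_limit hl] at h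
      simp at h
  have h1 : (Sup.stage w b).d false 1 = true := by
    by_contra h
    exact hbad (Or.inr (Or.inl ⟨hflip, by simpa using h⟩))
  have h2 : (Sup.stage w b).d true 0 ≠ w 1 := fun h =>
    hbad (Or.inr (Or.inr (Or.inl ⟨hflip, h⟩)))
  obtain ⟨a, hab, ha⟩ := Sup.exists_flip_of_d h1
  have h3 : (Sup.stage w b).d true = (Sup.stage w a).d true := by
    rw [← Sup.stage_e ha hab]
    funext n
    by_contra h
    exact hbad (Or.inr (Or.inr (Or.inr (Or.inr ⟨hflip, n, h⟩))))
  obtain ⟨δ, hδ⟩ := hstep a 1 ha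
  obtain ⟨ρ, hρ⟩ := hstep b 0 hflip
  rw [Sup.stage_d_true hδ, Sup.stage_d_true hρ] at h3
  rw [Sup.stage_d_true hρ, h3] at h2
  have hδρ : δ < ρ := by
    have : 1 + a < 1 + b := by gcongr
    rw [hδ, hρ] at this
    simpa using this
  obtain ⟨τ, rfl⟩ := exists_add_of_le hδρ.le
  have hτ : 0 < τ := by simpa [pos_iff_ne_zero] using hδρ.ne
  refine ⟨δ, τ, hτ, h2, iter_recur _ hτ h3 fun c hc n hn => ?_⟩
  by_cases hc0 : c = 0
  · simpa [hc0] using hn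
  obtain ⟨e, he⟩ := exists_add_of_le (le_add_self : 1 ≤ δ + c + 1)
  have hae : a < e := by
    rw [← add_lt_add_iff_left 1, ← he, hδ]
    simpa [Order.one_le_iff_ne_zero] using hc0
  have heb : e ≤ b := by
    rw [← add_le_add_iff_left 1, ← he, hρ]
    simpa using hc.le
  by_contra hne
  refine hnb e heb (Or.inr (Or.inr (Or.inr (Or.inl ⟨Sup.stage_d_of_flip w hae ha, n, ?_, ?_⟩))))
  · rw [Sup.stage_d_true he.symm, hn]
  · rw [Sup.stage_e ha hae, Sup.stage_d_true hδ]
    simpa using hne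

end ITTM

namespace ITTM

/-! ### Every real is the first component of an accepted pair -/

theorem exists_iter_le_omega_one (y : R) : ∃ b < (ω_ 1 : Ordinal.{0}),
    ∀ n, iter y (ω_ 1) n = false → ∀ c, b ≤ c → c < ω_ 1 → iter y c n = false := by
  have hfalse : ∀ n, ∃ b < (ω_ 1 : Ordinal.{0}), iter y (ω_ 1) n = false →
      ∀ c, b ≤ c → c < ω_ 1 → iter y c n = false := by
    intro n
    by_cases h : iter y (ω_ 1) n = false
    · rw [iter_limit y (Cardinal.isSuccLimit_omega 1)] at h
      obtain ⟨b, hb, h⟩ := lsup_eq_false.1 h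
      exact ⟨b, hb, fun _ => h⟩
    · exact ⟨0, (Cardinal.isSuccLimit_omega 1).bot_lt, fun h' => absurd h' h⟩
  choose β hβ hβf using hfalse
  exact ⟨⨆ n, β n, iSup_lt_omega_one hβ, fun n hn c hc =>
    hβf n hn c ((Ordinal.le_iSup β n).trans hc)⟩

theorem exists_iter_eq_omega_one (y : R) {a : Ordinal.{0}} (ha : a < ω_ 1) :
    ∃ b, a < b ∧ b < ω_ 1 ∧ iter y b = iter y (ω_ 1) := by
  have hlim : IsSuccLimit (ω_ 1 : Ordinal.{0}) := Cardinal.isSuccLimit_omega 1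
  have hE := iter_limit y hlim
  have htrue : ∀ b n, ∃ c, b < ω_ 1 → c < ω_ 1 ∧ b ≤ c ∧
      (iter y (ω_ 1) n = true → iter y c n = true) := by
    intro b n
    by_cases h : iter y (ω_ 1) n = true
    · by_cases hb : b < ω_ 1
      · rw [hE] at h
        obtain ⟨c, h1, h2, h3⟩ := lsup_eq_true.1 h b hb
        exact ⟨c, fun _ => ⟨h2, h1, fun _ => h3⟩⟩
      · exact ⟨0, fun h => absurd h hb⟩
    · exact ⟨b, fun hb => ⟨hb, le_rfl, fun h' => absurd h' h⟩⟩
  obtain ⟨β, hβ, hβf⟩ := exists_iter_le_omega_one y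
  choose c hc using htrue
  have hsup : ∀ f : ℕ → Ordinal.{0}, (∀ n, f n < ω_ 1) → (∀ n, f n ≤ ⨆ n, f n) ∧
      ⨆ n, f n < ω_ 1 := fun f hf => ⟨Ordinal.le_iSup f, iSup_lt_omega_one hf⟩
  let h : ℕ → Ordinal.{0} := fun k => k.rec (max (a + 1) β) fun _ b => (⨆ n, c b n) + 1
  have hh : ∀ k, h k < ω_ 1 := by
    intro k
    induction k with
    | zero => exact max_lt (hlim.add_one_lt ha) hβ
    | succ k ih => exact hlim.add_one_lt (hsup _ fun n => (hc _ n ih).1).2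
  have hcn : ∀ k n, c (h k) n < h (k + 1) := fun k n =>
    lt_add_one_iff.2 ((hsup _ fun n => (hc _ n (hh k)).1).1 n)
  have hmono : ∀ k, h k < h (k + 1) := fun k => (hc _ 0 (hh k)).2.1.trans_lt (hcn k 0)
  obtain ⟨hle, hlt⟩ := hsup h hh
  set b := ⨆ k, h k with hb
  have hlt' : ∀ e, e < b ↔ ∃ k, e < h k := fun e => Ordinal.lt_iSup_iff
  have hab : a < b := (hlt' a).2 ⟨0, (lt_add_one a).trans_le (le_max_left _ _)⟩
  have hblim : IsSuccLimit b := by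
    rcases zero_or_add_one_or_limit b with h0 | ⟨e, he⟩ | h0
    · rw [h0] at hab
      simp at hab
    · obtain ⟨k, hk⟩ := (hlt' e).1 (he ▸ lt_add_one e)
      have := (hmono k).trans_le (hle (k + 1))
      rw [he, lt_add_one_iff] at this
      exact absurd hk this.not_gt
    · exact h0
  refine ⟨b, hab, hlt, ?_⟩
  funext n
  rw [iter_limit y hblim]
  cases hn : iter y (ω_ 1) n with
  | false =>
    exact lsup_of_eventually ((hmono 0).trans_le (hle 1)) fun e h1 h2 =>
      hβf n hn e ((le_max_right _ _).trans h1) (h2.trans hlt)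
  | true =>
    refine lsup_eq_true.2 fun e he => ?_
    obtain ⟨k, hk⟩ := (hlt' e).1 he
    exact ⟨c (h k) n, hk.le.trans (hc _ n (hh k)).2.1, (hcn k n).trans_le (hle (k + 1)),
      (hc _ n (hh k)).2.2 hn⟩

theorem exists_iter_recur (y : R) : ∃ δ ρ, δ < ρ ∧ ρ < ω_ 1 ∧ iter y ρ = iter y δ ∧
    ∀ c, δ ≤ c → c ≤ ρ → ∀ n, iter y c n = true → iter y δ n = true := by
  obtain ⟨β, hβ, hβf⟩ := exists_iter_le_omega_one y
  obtain ⟨δ, h1, h2, h3⟩ := exists_iter_eq_omega_one y hβ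
  obtain ⟨ρ, h4, h5, h6⟩ := exists_iter_eq_omega_one y h2
  refine ⟨δ, ρ, h4, h5, h6.trans h3.symm, fun c hc hc' n hn => ?_⟩
  rw [h3]
  by_contra h
  have := hβf n (by simpa using h) c (h1.le.trans hc)
    (hc'.trans_lt h5)
  rw [hn] at this
  simp at this

theorem countable_Iic_of_lt_omega_one {ρ : Ordinal.{0}} (h : ρ < ω_ 1) :
    (Set.Iic ρ).Countable := by
  have h' : ρ + 1 < ω_ 1 := (Cardinal.isSuccLimit_omega 1).add_one_lt h
  rw [← Cardinal.ord_aleph, Cardinal.lt_ord, ← Cardinal.succ_aleph0, Order.lt_succ_iff] at h'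
  have : Set.Iic ρ = Set.Iio (ρ + 1) := by
    ext
    simp
  rw [this, ← Cardinal.le_aleph0_iff_set_countable, Cardinal.mk_Iio_ordinal,
    Cardinal.lift_le_aleph0]
  exact h'

theorem exists_enum {δ ρ : Ordinal.{0}} (hδ : δ ≤ ρ) (hρ : ρ < ω_ 1) :
    ∃ f : ℕ → Ordinal.{0}, f 0 = ρ ∧ f 1 = δ ∧ ∀ γ, γ ≤ ρ ↔ ∃ n, f n = γ := by
  obtain ⟨g, hg⟩ := (countable_Iic_of_lt_omega_one hρ).exists_eq_range ⟨ρ, Set.mem_Iic.2 le_rfl⟩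
  have hg' : ∀ γ, γ ≤ ρ ↔ ∃ n, g n = γ := fun γ => by rw [← Set.mem_range, ← hg, Set.mem_Iic]
  refine ⟨fun | 0 => ρ | 1 => δ | n + 2 => g n, rfl, rfl, fun γ => ⟨fun h => ?_, ?_⟩⟩
  · obtain ⟨n, hn⟩ := (hg' γ).1 h
    exact ⟨n + 2, hn⟩
  · rintro ⟨_ | _ | n, rfl⟩
    · exact le_rfl
    · exact hδ
    · exact (hg' _).2 ⟨n, rfl⟩

namespace Sup
variable {w : R}

theorem flip_iff (b : Ordinal.{0}) (n : ℕ) : (stage w b).flip n = true ↔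
    (stage w b).d false n = false ∧ (stage w (b + 1)).d false n = true := by
  rw [stage_add_one]
  simp only [flip, next]
  cases (stage w b).d false n <;> simp

section Clock
variable {f : ℕ → Ordinal.{0}} {ρ : Ordinal.{0}}

theorem clock_d
    (hf : ∀ γ, γ ≤ ρ ↔ ∃ n, f n = γ)
    (hw : ∀ d n, oper (rightR w) d n = decide (∃ m, f m < f n ∧ d m = false))
    (b : Ordinal.{0}) (n : ℕ) :
    (stage w b).d false n = true ↔ f n + 1 < 1 + b := by
  induction b using ord_induction generalizing n with
  | h0 => simp [stage_zero, init, zeroR]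
  | h1 b ih =>
    rcases add_one_eq_or_limit b with ⟨γ, hγ, hb⟩ | ⟨hb, hb'⟩
    · have hv : (stage w b).v false n = true ↔ γ < f n := by
        rw [stage_v_of_zero_or_add_one hb]
        simp only [comp, Bool.false_eq_true, if_false, hw, decide_eq_true_eq]
        have : ∀ m, (stage w b).d false m = false ↔ γ ≤ f m := fun m => by
          rw [← Bool.not_eq_true, ih, hγ]
          simp
        simp only [this]
        constructor
        · rintro ⟨m, h1, h2⟩
          exact h2.trans_lt h1
        · intro h
          obtain ⟨m, rfl⟩ := (hf γ).1 (h.le.trans ((hf _).2 ⟨n, rfl⟩))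
          exact ⟨m, h, le_rfl⟩
      have hd : (stage w b).d false n = true ↔ f n < γ := by
        rw [ih, hγ]
        simp
      rw [stage_add_one, ← add_assoc, hγ]
      simp only [next, Bool.false_eq_true, if_false, Bool.or_eq_true, hd, Bool.not_eq_true',
        ← Bool.not_eq_true, hv, not_lt, lt_add_one_iff]
      simp only [Order.add_one_le_iff, lt_add_one_iff]
      exact ⟨fun h => h.elim le_of_lt id, Or.inr⟩
    · have h1 := flip_iff (w := w) b n
      rw [flip_limit hb] at h1
      have h2 : (stage w (b + 1)).d false n = true ↔ (stage w b).d false n = true := by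
        constructor
        · intro h
          by_contra h'
          simp [h] at h1
          exact h' h1
        · exact stage_d_mono w (lt_add_one b).le
      rw [h2, ih, ← add_assoc, hb', lt_add_one_iff]
      refine ⟨le_of_lt, fun h => h.lt_of_ne ?_⟩
      rintro rfl
      simp at hb
  | h2 b hb ih =>
    rw [stage_d_false_limit hb, one_add_of_omega0_le (omega0_le_of_isSuccLimit hb)]
    constructor
    · rintro ⟨c, hc, h⟩
      refine ((ih c hc n).1 h).trans ?_
      rw [← one_add_of_omega0_le (omega0_le_of_isSuccLimit hb)]
      gcongr
    · intro h
      exact ⟨f n + 1 + 1, hb.add_one_lt h, (ih _ (hb.add_one_lt h) n).2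
        ((lt_add_one _).trans_le le_add_self)⟩

theorem clock_flip
    (hf : ∀ γ, γ ≤ ρ ↔ ∃ n, f n = γ)
    (hw : ∀ d n, oper (rightR w) d n = decide (∃ m, f m < f n ∧ d m = false))
    (b : Ordinal.{0}) (n : ℕ) :
    (stage w b).flip n = true ↔ f n + 1 = 1 + b := by
  rw [flip_iff, ← Bool.not_eq_true, clock_d hf hw, clock_d hf hw, ← add_assoc, lt_add_one_iff,
    not_lt]
  exact ⟨fun h => le_antisymm h.2 h.1, fun h => ⟨h.ge, h.le⟩⟩

theorem clock_chg_add_one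
    (hf : ∀ γ, γ ≤ ρ ↔ ∃ n, f n = γ)
    (hw : ∀ d n, oper (rightR w) d n = decide (∃ m, f m < f n ∧ d m = false))
    {b : Ordinal.{0}} (hb : ¬ IsSuccLimit b) (hρ : 1 + b ≤ ρ + 1) :
    (stage w (b + 1)).chg true = true := by
  rcases add_one_eq_or_limit b with ⟨γ, hγ, -⟩ | ⟨h, -⟩
  · rw [hγ, ← succ_eq_add_one, ← succ_eq_add_one, succ_le_succ_iff] at hρ
    obtain ⟨n, rfl⟩ := (hf γ).1 hρ
    rw [stage_add_one]
    simp only [next, if_true, decide_eq_true_eq]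
    exact ⟨n, (clock_flip hf hw b n).2 hγ.symm⟩
  · exact absurd h hb

theorem clock_chg
    (hf : ∀ γ, γ ≤ ρ ↔ ∃ n, f n = γ)
    (hw : ∀ d n, oper (rightR w) d n = decide (∃ m, f m < f n ∧ d m = false))
    {b : Ordinal.{0}} (hρ : 1 + b ≤ ρ + 1) :
    ¬ ((stage w b).chg true = false ∧ (stage w b).chg false = false) := by
  have hlim : ∀ c ≤ b, IsSuccLimit c → (stage w c).chg true = true := by
    intro c hcb hc
    rw [stage_limit w hc]
    refine lsup_eq_true.2 fun a ha => ?_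
    have h := hc.add_one_lt ha
    refine ⟨a + 1 + 1, ((lt_add_one a).trans (lt_add_one _)).le, hc.add_one_lt h,
      clock_chg_add_one hf hw (by simp) (le_trans ?_ hρ)⟩
    gcongr
    exact h.le.trans hcb
  rintro ⟨h1, h2⟩
  rcases zero_or_add_one_or_limit b with rfl | ⟨c, rfl⟩ | hb
  · simp [stage_zero, init] at h1
  · by_cases hc : IsSuccLimit c
    · rw [stage_add_one] at h2
      simp [next, hlim c (lt_add_one c).le hc] at h2
    · rw [clock_chg_add_one hf hw hc (le_trans (by gcongr; exact (lt_add_one c).le) hρ)] at h1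
      simp at h1
  · rw [hlim b le_rfl hb] at h1
    simp at h1

end Clock

end Sup

theorem leftR_pairR (y z : R) : leftR (pairR y z) = y := by
  funext n
  simp [leftR, pairR]

theorem rightR_pairR (y z : R) : rightR (pairR y z) = z := by
  funext n
  simp [rightR, pairR, Nat.mul_add_div]

theorem exists_pairR_mem_accepted (y : R) : ∃ z, pairR y z ∈ accepted := by
  obtain ⟨δ, ρ, hδρ, hρ, hrec, hle⟩ := exists_iter_recur y
  obtain ⟨f, hf0, hf1, hf⟩ := exists_enum hδρ.le hρ
  obtain ⟨z, hz0, hz⟩ := exists_stream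
    (fun d _ n => decide (∃ m, f m < f n ∧ d m = false)) (fun d u n h => by
      simp only [decide_eq_true_eq] at h ⊢
      obtain ⟨m, h1, h2⟩ := h
      exact ⟨m + 1, fun d' u' h _ => ⟨m, h1, by rw [h m (by omega), h2]⟩⟩) (!iter y δ 0)
  refine ⟨z, ?_⟩
  set w := pairR y z with hwd
  have hl : leftR w = y := leftR_pairR y z
  have hr : rightR w = z := rightR_pairR y z
  have hw : ∀ d n, oper (rightR w) d n = decide (∃ m, f m < f n ∧ d m = false) := by
    intro d n
    rw [hr, hz]
  have hw1 : w 1 = !iter y δ 0 := by rw [← hz0, ← hr]; rfl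
  obtain ⟨b, hb⟩ := exists_add_of_le (le_add_self : 1 ≤ ρ + 1)
  obtain ⟨a, ha⟩ := exists_add_of_le (le_add_self : 1 ≤ δ + 1)
  have hab : a < b := by
    rw [← add_lt_add_iff_left 1, ← ha, ← hb]
    simpa using hδρ
  have hflip0 : ∀ c, (Sup.stage w c).flip 0 = true ↔ c = b := by
    intro c
    rw [Sup.clock_flip hf hw, hf0, hb]
    simp [eq_comm]
  have hflip1 : (Sup.stage w a).flip 1 = true := by
    rw [Sup.clock_flip hf hw, hf1, ha]
  have he : ∀ c, a < c → (Sup.stage w c).e = iter y δ := by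
    intro c hc
    rw [Sup.stage_e hflip1 hc, Sup.stage_d_true ha.symm, hl]
  have hd : (Sup.stage w b).d true = iter y δ := by
    rw [Sup.stage_d_true hb.symm, hl, hrec]
  have hbad : ∀ c ≤ b, ¬ (Sup.stage w c).Bad w := by
    intro c hc
    have hc' : 1 + c ≤ ρ + 1 := by
      rw [hb]
      gcongr
    rintro (h | ⟨h1, h2⟩ | ⟨h1, h2⟩ | ⟨h1, n, h2, h3⟩ | ⟨h1, n, h2⟩)
    · exact Sup.clock_chg hf hw hc' h
    · rw [hflip0] at h1
      subst h1
      rw [Sup.stage_d_of_flip w hab hflip1] at h2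
      simp at h2
    · rw [hflip0] at h1
      subst h1
      rw [hd, hw1] at h2
      simp at h2
    · rw [Sup.clock_d hf hw, hf1] at h1
      have hac : a < c := by rwa [ha, add_lt_add_iff_left] at h1
      rw [he c hac] at h3
      refine absurd ?_ (Bool.not_eq_true _ ▸ h3)
      rcases add_one_eq_or_limit c with ⟨γ, hγ, -⟩ | ⟨hl', hl''⟩
      · rw [Sup.stage_d_true hγ, hl] at h2
        rw [hγ, ← succ_eq_add_one, ← succ_eq_add_one, succ_lt_succ_iff] at h1
        rw [hγ, ← succ_eq_add_one, ← succ_eq_add_one, succ_le_succ_iff] at hc'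
        exact hle γ h1.le hc' n h2
      · rw [Sup.stage_d_true_limit hl', hl] at h2
        rw [hl''] at h1 hc'
        refine hle c ((lt_add_one δ).trans h1).le (lt_add_one_iff.1 (hc'.lt_of_ne ?_)) n h2
        rintro rfl
        simp at hl'
    · rw [hflip0] at h1
      subst h1
      rw [hd, he c hab] at h2
      exact h2 rfl
  refine ⟨b, ⟨hbad b le_rfl, (hflip0 b).2 rfl⟩, fun c hc => ⟨hbad c hc.le, ?_⟩⟩
  by_contra h
  exact hc.ne ((hflip0 c).1 (by simpa using h))

end ITTM

namespace ITTM

/-! ### Simulation of a machine by the iteration of a continuous operator -/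

/-- The bits describing a snapshot, together with bits for detecting limit stages. -/
inductive Bit (Q : ℕ) where
  | tape (i : Fin 3) (n : ℕ)
  | head (n : ℕ)
  | state (q : Fin (Q + 1))
  | flag (b : Bool)
  | started
  deriving Countable

theorem Bit.exists_equiv (Q : ℕ) : ∃ e : Bit Q ≃ ℕ, e (.tape 2 0) = 0 := by
  have : Infinite (Bit Q) := Infinite.of_injective (fun n => Bit.head n) fun a b h => by
    simpa using h
  obtain ⟨e⟩ := nonempty_equiv_of_countable (α := Bit Q) (β := ℕ)
  exact ⟨e.trans (Equiv.swap (e (.tape 2 0)) 0), by simp⟩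

/-- The bits of a snapshot with given flags. -/
def Snapshot.bits {Q : ℕ} (s : Snapshot Q) (f : Bool → Bool) : Bit Q → Bool
  | .tape i n => s.tape i n
  | .head n => decide (n = s.head)
  | .state q => decide (q = s.state)
  | .flag b => f b
  | .started => true

namespace Machine
variable (M : Machine)

/-- Both flags are set, which happens exactly at limit stages. -/
def AtLimit {Q : ℕ} (D : Bit Q → Bool) : Prop := ∀ b, D (.flag b) = true

/-- The flags at the next stage. -/
noncomputable def nextFlag {Q : ℕ} (D : Bit Q → Bool) (b : Bool) : Bool :=
  if AtLimit D then !b else D (.flag !b)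

/-- The bits may be read as a snapshot with state `q` and head position `h`. -/
def Reads (D : Bit M.Q → Bool) (q : Fin (M.Q + 1)) (h : ℕ) : Prop :=
  if AtLimit D then q = M.limit ∧ h = 0 else D (.state q) = true ∧ D (.head h) = true

/-- The operation on bits simulating one step of a machine that stops when halted. -/
noncomputable def simStep (D : Bit M.Q → Bool) (u : R) (i : Bit M.Q) : Bool :=
  if D .started then
    decide (∃ q h, M.Reads D q h ∧ (if q = M.halt then D i
      else (M.stepSnap ⟨q, h, fun j n => D (.tape j n)⟩).bits (nextFlag D) i) = true)
  else (M.init u).bits (fun b => !b) i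

variable {M}

theorem simStep_continuous {D : Bit M.Q → Bool} {u : R} {i : Bit M.Q}
    (h : M.simStep D u i = true) : ∃ (S : Finset (Bit M.Q)) (N : ℕ), ∀ D' u',
      (∀ j ∈ S, D' j = D j) → (∀ k < N, u' k = u k) → M.simStep D' u' i = true := by
  by_cases hs : D .started = true
  · simp only [simStep, hs, if_true, decide_eq_true_eq] at h
    obtain ⟨q, h, hr, ho⟩ := h
    refine ⟨{.started, .flag true, .flag false, .state q, .head h, .tape 0 h, .tape 1 h,
      .tape 2 h, i}, 0, fun D' u' hD _ => ?_⟩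
    simp only [Finset.mem_insert, Finset.mem_singleton, forall_eq_or_imp, forall_eq] at hD
    obtain ⟨h1, h2, h3, h4, h5, h6, h7, h8, h9⟩ := hD
    have hflag : ∀ b, D' (.flag b) = D (.flag b) := by rintro (_ | _) <;> assumption
    have hlim : AtLimit D' ↔ AtLimit D := by simp [AtLimit, hflag]
    have hnext : nextFlag D' = nextFlag D := by
      funext b
      simp [nextFlag, hlim, hflag]
    have htape : (fun j => D' (.tape j h)) = fun j => D (.tape j h) := by
      funext j
      fin_cases j <;> assumption
    simp only [simStep, h1, hs, if_true, decide_eq_true_eq]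
    refine ⟨q, h, ?_, ?_⟩
    · simpa only [Reads, hlim, h4, h5] using hr
    · rw [← ho, hnext, h9]
      split_ifs
      · rfl
      · cases i <;> simp [Snapshot.bits, stepSnap, htape, h9]
  · refine ⟨{.started}, match i with | .tape _ n => n + 1 | _ => 0, fun D' u' hD hu => ?_⟩
    have hs' : ¬ D' .started = true := by rwa [hD _ (by simp)]
    rw [← h]
    simp only [simStep, hs, hs']
    cases i <;> simp [Snapshot.bits, init]
    rw [hu _ (lt_add_one _)]

/-- The bits describe a snapshot. -/
structure Describes (D : Bit M.Q → Bool) (s : Snapshot M.Q) : Prop where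
  started : D .started = true
  tape : ∀ i n, D (.tape i n) = s.tape i n
  flag : ∃ b, D (.flag b) = true
  reads : ∀ q h, M.Reads D q h ↔ q = s.state ∧ h = s.head

theorem describes_bits (s : Snapshot M.Q) {f : Bool → Bool} (h1 : ∃ b, f b = true)
    (h2 : ¬ ∀ b, f b = true) : Describes (M := M) (s.bits f) s where
  started := rfl
  tape _ _ := rfl
  flag := h1
  reads q h := by
    have : ¬ AtLimit (s.bits f) := h2
    simp [Reads, this, Snapshot.bits]

theorem Describes.simStep_of_halt {D : Bit M.Q → Bool} {s : Snapshot M.Q} (h : Describes D s)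
    (hs : s.state = M.halt) (u : R) : M.simStep D u = D := by
  funext i
  simp only [simStep, h.started, if_true, h.reads, and_assoc]
  rw [Bool.eq_iff_iff]
  simp [hs]

theorem Describes.simStep_of_ne_halt {D : Bit M.Q → Bool} {s : Snapshot M.Q} (h : Describes D s)
    (hs : s.state ≠ M.halt) (u : R) : M.simStep D u = (M.stepSnap s).bits (nextFlag D) := by
  funext i
  simp only [simStep, h.started, if_true, h.reads, and_assoc, h.tape]
  rw [Bool.eq_iff_iff]
  simp [hs]

theorem not_forall_nextFlag {Q : ℕ} (D : Bit Q → Bool) : ¬ ∀ b, nextFlag D b = true := by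
  intro h
  by_cases hl : AtLimit D
  · simpa [nextFlag, hl] using h true
  · exact hl fun b => by simpa [nextFlag, hl] using h !b

theorem exists_nextFlag {Q : ℕ} {D : Bit Q → Bool} (h : ∃ b, D (.flag b) = true) :
    ∃ b, nextFlag D b = true := by
  by_cases hl : AtLimit D
  · exact ⟨false, by simp [nextFlag, hl]⟩
  · obtain ⟨b, hb⟩ := h
    exact ⟨!b, by simp [nextFlag, hl, hb]⟩

section Simulation
variable {e : Bit M.Q ≃ ℕ} {y : R}

theorem iter_add_one_eq_simStep
    (hy : ∀ d n, oper y d n = M.simStep (fun i => d (e i)) y (e.symm n))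
    (c : Ordinal.{0}) :
    (fun i => iter y (c + 1) (e i)) = M.simStep (fun i => iter y c (e i)) y := by
  funext i
  rw [iter_add_one, hy, Equiv.symm_apply_apply]

theorem describes_iter
    (hy : ∀ d n, oper y d n = M.simStep (fun i => d (e i)) y (e.symm n))
    {a : Ordinal.{0}} (ha : ∀ b < a, ¬ M.haltedAt y b) :
    ∀ b ≤ a, Describes (fun i => iter y (1 + b) (e i)) (M.snap y b) := by
  have hstep : ∀ b < a, Describes (fun i => iter y (1 + b) (e i)) (M.snap y b) →
      (fun i => iter y (1 + (b + 1)) (e i)) =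
        (M.snap y (b + 1)).bits (nextFlag fun i => iter y (1 + b) (e i)) := by
    intro b hb h
    rw [← add_assoc, iter_add_one_eq_simStep hy, h.simStep_of_ne_halt (ha b hb), snap_add_one]
  intro b
  induction b using ord_induction with
  | h0 =>
    intro _
    rw [add_zero, ← zero_add (1 : Ordinal.{0}), iter_add_one_eq_simStep hy, snap_zero]
    have : M.simStep (fun i => iter y 0 (e i)) y = (M.init y).bits fun b => !b := by
      funext i
      simp [simStep, iter_zero, zeroR]
    rw [this]
    exact describes_bits _ ⟨false, rfl⟩ fun h => by simpa using h true
  | h1 b ih =>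
    intro hb
    have hb' := Order.add_one_le_iff.1 hb
    rw [hstep b hb' (ih hb'.le)]
    exact describes_bits _ (exists_nextFlag (ih hb'.le).flag) (not_forall_nextFlag _)
  | h2 b hb ih =>
    intro hba
    have hd : ∀ c < b, Describes (fun i => iter y (1 + c) (e i)) (M.snap y c) :=
      fun c hc => ih c hc (hc.le.trans hba)
    have hit : ∀ i, iter y (1 + b) (e i) = lsup (fun c => iter y (1 + c) (e i)) b := fun i => by
      rw [iter_limit y (isSuccLimit_add _ hb)]
      exact lsup_add hb.bot_lt
    have hflag : ∀ f, iter y (1 + b) (e (.flag f)) = true := by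
      intro f
      rw [hit]
      refine lsup_eq_true.2 fun c hc => ?_
      have hc1 := hb.add_one_lt hc
      have hc2 := hb.add_one_lt hc1
      have h1 := hstep c (hc.trans_le hba) (hd c hc)
      have h2 := hstep (c + 1) (hc1.trans_le hba) (hd _ hc1)
      obtain ⟨g, hg⟩ := (hd _ hc1).flag
      by_cases hfg : g = f
      · exact ⟨c + 1, (lt_add_one c).le, hc1, hfg ▸ hg⟩
      · refine ⟨c + 1 + 1, ((lt_add_one c).trans (lt_add_one _)).le, hc2, ?_⟩
        have hl : ¬ AtLimit fun i => iter y (1 + (c + 1)) (e i) := by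
          rw [h1]
          exact not_forall_nextFlag _
        obtain rfl : g = !f := by cases f <;> cases g <;> simp_all
        refine (congrFun h2 (.flag f)).trans ?_
        simpa [Snapshot.bits, nextFlag, hl] using hg
    rw [M.snap_limit y hb]
    exact
      { started := by
          rw [hit]
          exact lsup_of_eventually hb.bot_lt fun c _ hc => (hd c hc).started
        tape := fun i n => by
          rw [hit]
          exact lsup_congr fun c hc => (hd c hc).tape i n
        flag := ⟨true, hflag true⟩
        reads := fun q h => by
          have : AtLimit fun i => iter y (1 + b) (e i) := hflag
          simp [Reads, this] }

theorem iter_eq_of_outputs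
    (hy : ∀ d n, oper y d n = M.simStep (fun i => d (e i)) y (e.symm n))
    (he : e (.tape 2 0) = 0) {z : R} (hz : M.outputs y z) :
    ∃ a, ∀ b, a ≤ b → iter y b 0 = z 0 := by
  obtain ⟨a, ⟨h1, h2⟩, rfl⟩ := hz
  have hd := describes_iter hy h2 a le_rfl
  have hfix : ∀ c, iter y (1 + a + c) = iter y (1 + a) := by
    intro c
    induction c using ord_induction with
    | h0 => rw [add_zero]
    | h1 c ih =>
      have := hd.simStep_of_halt h1 y
      rw [← iter_add_one_eq_simStep hy] at this
      rw [← add_assoc, iter_add_one, ih, ← iter_add_one]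
      funext n
      simpa using congrFun this (e.symm n)
    | h2 c hc ih =>
      funext n
      rw [iter_limit y (isSuccLimit_add _ hc)]
      beta_reduce
      rw [lsup_add hc.bot_lt]
      exact lsup_of_eventually hc.bot_lt fun b _ hb => by rw [ih b hb]
  refine ⟨1 + a, fun b hb => ?_⟩
  obtain ⟨c, rfl⟩ := exists_add_of_le hb
  rw [hfix, ← hd.tape 2 0, he]

end Simulation

variable (M)

theorem exists_iter_eq_output :
    ∃ y : R, ∀ z, M.outputs y z → ∃ a, ∀ b, a ≤ b → iter y b 0 = z 0 := by
  obtain ⟨e, he⟩ := Bit.exists_equiv M.Q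
  obtain ⟨y, -, hy⟩ := exists_stream
    (fun d u n => M.simStep (fun i => d (e i)) u (e.symm n)) (fun d u n h => by
      obtain ⟨S, N, hS⟩ := simStep_continuous h
      refine ⟨max N (S.sup e + 1), fun d' u' hd hu => hS _ _ (fun j hj => hd _ ?_) fun k hk =>
        hu k (hk.trans_le (le_max_left _ _))⟩
      exact (Nat.lt_succ_of_le (Finset.le_sup (f := e) hj)).trans_le (le_max_right _ _)) false
  exact ⟨y, fun z hz => iter_eq_of_outputs (fun d n => by rw [hy]) he hz⟩

end Machine

theorem not_outputs_of_accepted (M : Machine) :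
    ∃ y : R, ∀ z, M.outputs y z → pairR y z ∉ accepted := by
  obtain ⟨y, hy⟩ := M.exists_iter_eq_output
  refine ⟨y, fun z hz h => ?_⟩
  obtain ⟨a, ha⟩ := hy z hz
  obtain ⟨δ, τ, hτ, h1, h2⟩ := exists_recur_of_accepted h
  rw [leftR_pairR] at h1 h2
  apply h1
  rw [← h2 a, ha _ ((Ordinal.le_mul_right a hτ).trans le_add_self)]
  rfl

end ITTM

/-- **No Uniformization Theorem.** There is an infinite time decidable subset
of the plane, all of whose slices are nonempty, which does not contain the
graph of any infinite time computable total function. -/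
theorem no_uniformization :
    ∃ A : Set (ITTM.R × ITTM.R),
      ITTM.ITTMDecidable (pairCodes A) ∧
      (∀ y : ITTM.R, ∃ z : ITTM.R, (y, z) ∈ A) ∧
      ¬ ∃ M : ITTM.Machine, ∀ y : ITTM.R, ∃ z : ITTM.R, M.outputs y z ∧ (y, z) ∈ A := by
  have hpair : ∀ w, ITTM.pairR (leftR w) (rightR w) = w := by
    intro w
    funext n
    rcases Nat.even_or_odd' n with ⟨k, rfl | rfl⟩ <;>
      simp [ITTM.pairR, leftR, rightR, Nat.mul_add_div]
  refine ⟨{p | ITTM.pairR p.1 p.2 ∈ ITTM.accepted}, ?_, ITTM.exists_pairR_mem_accepted, ?_⟩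
  · convert ITTM.decidable_accepted
    ext w
    simp [pairCodes, hpair]
  · rintro ⟨M, hM⟩
    obtain ⟨y, hy⟩ := ITTM.not_outputs_of_accepted M
    obtain ⟨z, h1, h2⟩ := hM y
    exact hy z h1 h2
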